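/- arXiv:1912.00135 — 2 statements merged into one kernel-verified Lean document; each statement's English description precedes it below -/
import Mathlib

section
/- Let N ≥ 2 be an integer, q ∈ (1, ∞), and c > 0. There exists a constant C = C(N, q, c) > 0 with the following property. Let m : ℝ^{N−1} → ℂ be smooth on ℝ^{N−1} ∖ {0} and satisfy ‖D^n m(ξ')‖ ≤ c ‖ξ'‖^{−n} for all ξ' ≠ 0 and all integers 0 ≤ n ≤ N + 1. Then for every sign ς ∈ {+1, −1} and every Schwartz function f ∈ 𝓢(ℝ^N; ℂ), the function M f defined for x = (x', x_N) with x_N > 0 by M f(x) = ∫_0^∞ (2π)^{−(N−1)} ∫_{ℝ^{N−1}} e^{i x'·ξ'} m(ξ') ‖ξ'‖ e^{−‖ξ'‖(x_N + y_N)} f̂(ξ', ς y_N) dξ' dy_N, where f̂(ξ', s) = ∫_{ℝ^{N−1}} e^{−i z'·ξ'} f(z', s) dz', satisfies ‖M f‖_{L^q(ℝ^N_+)} ≤ C ‖f‖_{L^q(ℝ^N_ς)}, where ℝ^N_ς = {x : ς x_N > 0}. -/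
open Real MeasureTheory
open scoped RealInnerProductSpace

/-- The `L^p` norm (real exponent `p`) of `f` with respect to the measure `μ`. -/
noncomputable def LqNorm {α : Type*} [MeasurableSpace α] {E : Type*} [NormedAddCommGroup E]
    (μ : Measure α) (p : ℝ) (f : α → E) : ℝ :=
  (∫ x, ‖f x‖ ^ p ∂μ) ^ (1 / p)

/-!
Writing `‖ξ‖` as an integral over scales `u` of smooth cutoffs to `‖ξ‖ ∼ u` decomposes the kernel
with Fourier transform `m ξ ‖ξ‖ e ^ (-t ‖ξ‖)` into pieces. The Mikhlin condition is invariant under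
dilations, so each piece rescales to a smooth symbol supported in a fixed annulus, with derivatives
bounded by `c e ^ (-t u / 2)`; with `d = dim V`, the piece at scale `u` is therefore
`O(c u ^ d e ^ (-t u / 2) (1 + u ‖x‖) ^ (-d - 1))`. Taking absolute values inside the integral over
`u` loses nothing: the resulting positive majorant has `L¹` norm `O(1 / t)` in the tangential
variable. With `t = x_N + y_N` the operator is dominated by a positive operator of Hilbert type, and
Schur's test with the weights `y_N ^ (-1 / (p q))`, `1 / p + 1 / q = 1`, gives the `L^q` bound.
-/

open Set Module
open scoped ENNReal NNReal FourierTransform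

section IteratedDerivatives

variable {E F : Type*} [NormedAddCommGroup E] [NormedSpace ℝ E] [NormedAddCommGroup F]
  [NormedSpace ℝ F] {U K : Set E} {k : ℕ}

lemma exists_bound_iteratedFDerivWithin_of_isCompact {f : E → F} (hK : IsCompact K) (hKU : K ⊆ U)
    (hU : UniqueDiffOn ℝ U) (hf : ContDiffOn ℝ k f U) :
    ∃ B : ℝ, 1 ≤ B ∧ ∀ n ≤ k, ∀ x ∈ K, ‖iteratedFDerivWithin ℝ n f U x‖ ≤ B := by
  have bound_order (n : ℕ) : ∃ B : ℝ, n ≤ k → ∀ x ∈ K, ‖iteratedFDerivWithin ℝ n f U x‖ ≤ B := by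
    by_cases hn : n ≤ k
    · obtain ⟨B, hB⟩ := hK.exists_bound_of_continuousOn
        ((hf.continuousOn_iteratedFDerivWithin (by exact_mod_cast hn) hU).mono hKU)
      exact ⟨B, fun _ => hB⟩
    · exact ⟨0, fun h => absurd h hn⟩
  choose B hB using bound_order
  obtain ⟨M, hM⟩ := ((finite_Iic k).image B).bddAbove
  exact ⟨max 1 M, le_max_left _ _, fun n hn x hx =>
    (hB n hn x hx).trans ((hM (mem_image_of_mem B hn)).trans (le_max_right _ _))⟩

lemma norm_iteratedFDerivWithin_smul_le_of_le {f : E → ℝ} {g : E → F} {x : E} {A B : ℝ}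
    (hU : UniqueDiffOn ℝ U) (hx : x ∈ U) (hf : ContDiffOn ℝ k f U) (hg : ContDiffOn ℝ k g U)
    (hA : ∀ i ≤ k, ‖iteratedFDerivWithin ℝ i f U x‖ ≤ A)
    (hB : ∀ i ≤ k, ‖iteratedFDerivWithin ℝ i g U x‖ ≤ B) {n : ℕ} (hn : n ≤ k) :
    ‖iteratedFDerivWithin ℝ n (fun y => f y • g y) U x‖ ≤ 2 ^ k * (A * B) := by
  have hA0 : 0 ≤ A := (norm_nonneg _).trans (hA 0 k.zero_le)
  have hB0 : 0 ≤ B := (norm_nonneg _).trans (hB 0 k.zero_le)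
  calc ‖iteratedFDerivWithin ℝ n (fun y => f y • g y) U x‖
      ≤ ∑ i ∈ Finset.range (n + 1), (n.choose i : ℝ) * ‖iteratedFDerivWithin ℝ i f U x‖ *
          ‖iteratedFDerivWithin ℝ (n - i) g U x‖ :=
        norm_iteratedFDerivWithin_smul_le hf hg hU hx (by exact_mod_cast hn)
    _ ≤ ∑ i ∈ Finset.range (n + 1), (n.choose i : ℝ) * (A * B) := by
        refine Finset.sum_le_sum fun i hi => ?_
        rw [mul_assoc]
        have hin : i ≤ n := Nat.lt_succ_iff.1 (Finset.mem_range.1 hi)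
        gcongr
        exacts [hA i (hin.trans hn), hB _ ((n.sub_le i).trans hn)]
    _ = 2 ^ n * (A * B) := by
        rw [← Finset.sum_mul]
        exact_mod_cast congrArg (fun s : ℕ => (s : ℝ) * (A * B)) (Nat.sum_range_choose n)
    _ ≤ 2 ^ k * (A * B) := by gcongr; norm_num

lemma norm_iteratedFDeriv_exp_neg_mul_le {T r : ℝ} (hT : 0 ≤ T) (hr : 1 ≤ r) (n : ℕ) :
    ‖iteratedFDeriv ℝ n (fun s : ℝ => rexp (-T * s)) r‖ ≤ 2 ^ n * n.factorial * rexp (-T / 2) := by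
  rw [norm_iteratedFDeriv_eq_norm_iteratedDeriv, iteratedDeriv_exp_const_mul, norm_mul, norm_pow,
    norm_neg, norm_of_nonneg hT, norm_of_nonneg (exp_nonneg _)]
  have pow_le : (T / 2) ^ n ≤ n.factorial * rexp (T / 2) := by
    have := pow_div_factorial_le_exp (T / 2) (by positivity) n
    rwa [div_le_iff₀ (by positivity), mul_comm] at this
  calc T ^ n * rexp (-T * r)
      = 2 ^ n * (T / 2) ^ n * rexp (-T * r) := by rw [← mul_pow]; ring_nf
    _ ≤ 2 ^ n * (n.factorial * rexp (T / 2)) * rexp (-T) := by gcongr; nlinarith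
    _ = 2 ^ n * n.factorial * rexp (-T / 2) := by
        rw [mul_assoc, mul_assoc, ← exp_add, ← mul_assoc]; ring_nf

lemma exists_bound_iteratedFDerivWithin_exp_neg_mul {φ : E → ℝ} (hK : IsCompact K) (hKU : K ⊆ U)
    (hU : UniqueDiffOn ℝ U) (hφ : ContDiffOn ℝ k φ U) (hφ1 : ∀ x ∈ K, 1 ≤ φ x) :
    ∃ B : ℝ, 0 ≤ B ∧ ∀ T, 0 ≤ T → ∀ n ≤ k, ∀ x ∈ K,
      ‖iteratedFDerivWithin ℝ n (fun y => rexp (-T * φ y)) U x‖ ≤ B * rexp (-T / 2) := by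
  obtain ⟨D, hD1, hD⟩ := exists_bound_iteratedFDerivWithin_of_isCompact hK hKU hU hφ
  refine ⟨k.factorial * (2 ^ k * k.factorial) * D ^ k, by positivity, fun T hT n hn x hx => ?_⟩
  have outer : ∀ i ≤ n, ‖iteratedFDerivWithin ℝ i (fun s : ℝ => rexp (-T * s)) univ (φ x)‖ ≤
      2 ^ k * k.factorial * rexp (-T / 2) := fun i hi => by
    rw [iteratedFDerivWithin_univ]
    refine (norm_iteratedFDeriv_exp_neg_mul_le hT (hφ1 x hx) i).trans ?_
    have := Nat.factorial_le (hi.trans hn)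
    gcongr
    exacts [by norm_num, hi.trans hn]
  have inner : ∀ i, 1 ≤ i → i ≤ n → ‖iteratedFDerivWithin ℝ i φ U x‖ ≤ D ^ i := fun i hi1 hi =>
    (hD i (hi.trans hn) x hx).trans (le_self_pow₀ hD1 (by lia))
  calc ‖iteratedFDerivWithin ℝ n (fun y => rexp (-T * φ y)) U x‖
      ≤ n.factorial * (2 ^ k * k.factorial * rexp (-T / 2)) * D ^ n :=
        norm_iteratedFDerivWithin_comp_le (g := fun s : ℝ => rexp (-T * s)) (by fun_prop) hφ
          (by exact_mod_cast hn) uniqueDiffOn_univ hU (mapsTo_univ _ _) (hKU hx) outer inner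
    _ ≤ k.factorial * (2 ^ k * k.factorial * rexp (-T / 2)) * D ^ k := by
        have := Nat.factorial_le hn
        gcongr
    _ = _ := by ring

end IteratedDerivatives

section Cutoff

/-- A smooth nonnegative cutoff supported in `[1 / 2, 1]` with integral one. Its rescalings satisfy
`∫ u in Ioi 0, scaleCutoff (u / s) = s`, which decomposes the factor `‖ξ‖` of a symbol into
contributions `u ∼ ‖ξ‖`. -/
noncomputable def scaleCutoff : ℝ → ℝ :=
  (⟨1 / 8, 1 / 4, by norm_num, by norm_num⟩ : ContDiffBump (3 / 4 : ℝ)).normed volume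

lemma contDiff_scaleCutoff {n : ℕ∞} : ContDiff ℝ n scaleCutoff := ContDiffBump.contDiff_normed _

lemma scaleCutoff_nonneg (r : ℝ) : 0 ≤ scaleCutoff r := ContDiffBump.nonneg_normed _ r

lemma support_scaleCutoff : Function.support scaleCutoff = Ioo (1 / 2) 1 := by
  rw [scaleCutoff, ContDiffBump.support_normed_eq, Real.ball_eq_Ioo]
  norm_num

lemma scaleCutoff_eq_zero_of_nonpos {r : ℝ} (hr : r ≤ 0) : scaleCutoff r = 0 := by
  by_contra h
  have : r ∈ Ioo (1 / 2) 1 := support_scaleCutoff ▸ h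
  linarith [this.1]

lemma integrableOn_scaleCutoff_div (s : ℝ) :
    IntegrableOn (fun u => scaleCutoff (u / s)) (Ioi 0) := by
  rcases eq_or_ne s 0 with rfl | hs
  · simp [scaleCutoff_eq_zero_of_nonpos le_rfl]
  · exact ((ContDiffBump.integrable_normed _).comp_div hs).integrableOn

lemma integral_scaleCutoff_div {s : ℝ} (hs : 0 ≤ s) :
    ∫ u in Ioi 0, scaleCutoff (u / s) = s := by
  rw [setIntegral_eq_integral_of_forall_compl_eq_zero fun u hu =>
    scaleCutoff_eq_zero_of_nonpos (div_nonpos_of_nonpos_of_nonneg (notMem_Ioi.1 hu) hs),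
    Measure.integral_comp_div, scaleCutoff, ContDiffBump.integral_normed, abs_of_nonneg hs,
    smul_eq_mul, mul_one]

end Cutoff

section ScaleDecomposition

variable {V E : Type*} [NormedAddCommGroup V] [MeasurableSpace V] [OpensMeasurableSpace V]
  [NormedAddCommGroup E] [NormedSpace ℝ E] {μ : Measure V} {g : V → E}

lemma integrable_scaleCutoff_smul (hg : AEStronglyMeasurable g μ)
    (hint : Integrable (fun ξ => ‖ξ‖ • g ξ) μ) :
    Integrable (fun p : V × ℝ => scaleCutoff (p.2 / ‖p.1‖) • g p.1)
      (μ.prod (volume.restrict (Ioi 0))) := by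
  have measurable_cutoff : Measurable fun p : V × ℝ => scaleCutoff (p.2 / ‖p.1‖) :=
    (contDiff_scaleCutoff (n := 0)).continuous.measurable.comp
      (measurable_snd.div measurable_fst.norm)
  have aestronglyMeasurable : AEStronglyMeasurable
      (fun p : V × ℝ => scaleCutoff (p.2 / ‖p.1‖) • g p.1) (μ.prod (volume.restrict (Ioi 0))) :=
    measurable_cutoff.aestronglyMeasurable.smul hg.comp_fst
  refine (integrable_prod_iff aestronglyMeasurable).2
    ⟨.of_forall fun ξ => (integrableOn_scaleCutoff_div ‖ξ‖).smul_const (g ξ), ?_⟩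
  convert hint.norm using 2 with ξ
  simp only [norm_smul, norm_of_nonneg (scaleCutoff_nonneg _), norm_norm]
  rw [integral_mul_const, integral_scaleCutoff_div (norm_nonneg ξ)]

lemma integral_norm_smul_eq_integral_scaleCutoff [CompleteSpace E] [SFinite μ]
    (hg : AEStronglyMeasurable g μ)
    (hint : Integrable (fun ξ => ‖ξ‖ • g ξ) μ) :
    ∫ ξ, ‖ξ‖ • g ξ ∂μ = ∫ u in Ioi 0, ∫ ξ, scaleCutoff (u / ‖ξ‖) • g ξ ∂μ :=
  calc ∫ ξ, ‖ξ‖ • g ξ ∂μ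
      = ∫ ξ, (∫ u in Ioi 0, scaleCutoff (u / ‖ξ‖) • g ξ) ∂μ := by
        simp only [integral_smul_const, integral_scaleCutoff_div (norm_nonneg _)]
    _ = ∫ u in Ioi 0, ∫ ξ, scaleCutoff (u / ‖ξ‖) • g ξ ∂μ :=
        integral_integral_swap (integrable_scaleCutoff_smul hg hint)

end ScaleDecomposition

section MikhlinSymbol

variable {V F : Type*} [NormedAddCommGroup V] [NormedSpace ℝ V] [NormedAddCommGroup F]
  [NormedSpace ℝ F] {k : ℕ} {c : ℝ} {m : V → F}

/-- A Mikhlin symbol of order `k` with constant `c`: a function of class `C^k` away from the origin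
whose derivatives of order `n ≤ k` are bounded there by `c ‖ξ‖ ^ (-n)`. -/
structure IsMikhlinSymbol (k : ℕ) (c : ℝ) (m : V → F) : Prop where
  contDiffOn : ContDiffOn ℝ k m {0}ᶜ
  norm_iteratedFDeriv_le : ∀ ξ ≠ 0, ∀ n ≤ k, ‖iteratedFDeriv ℝ n m ξ‖ ≤ c * ‖ξ‖ ^ (-(n : ℝ))

namespace IsMikhlinSymbol

lemma norm_le (hm : IsMikhlinSymbol k c m) {ξ : V} (hξ : ξ ≠ 0) : ‖m ξ‖ ≤ c := by
  simpa using hm.norm_iteratedFDeriv_le ξ hξ 0 k.zero_le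

lemma measurable [MeasurableSpace V] [OpensMeasurableSpace V] [MeasurableSpace F]
    [BorelSpace F] (hm : IsMikhlinSymbol k c m) : Measurable m :=
  measurable_of_continuousOn_compl_singleton 0 hm.contDiffOn.continuousOn

lemma comp_smul (hm : IsMikhlinSymbol k c m) {u : ℝ} (hu : 0 < u) :
    IsMikhlinSymbol k c fun η => m (u • η) where
  contDiffOn := hm.contDiffOn.comp (contDiff_const_smul u).contDiffOn
    fun _ hη => smul_ne_zero hu.ne' hη
  norm_iteratedFDeriv_le η hη n hn := by
    let dilation : V ≃L[ℝ] V := ContinuousLinearEquiv.smulLeft (Units.mk0 u hu.ne')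
    have norm_dilation : ‖(dilation : V →L[ℝ] V)‖ ≤ u :=
      ContinuousLinearMap.opNorm_le_bound _ hu.le fun x =>
        (norm_smul_of_nonneg hu.le x).le
    have chain : iteratedFDeriv ℝ n (fun η => m (u • η)) η =
        (iteratedFDeriv ℝ n m (u • η)).compContinuousLinearMap fun _ => dilation := by
      simp only [← iteratedFDerivWithin_univ]
      exact dilation.iteratedFDerivWithin_comp_right m uniqueDiffOn_univ (mem_univ (dilation η)) n
    calc ‖iteratedFDeriv ℝ n (fun η => m (u • η)) η‖
        ≤ ‖iteratedFDeriv ℝ n m (u • η)‖ * ∏ _ : Fin n, ‖(dilation : V →L[ℝ] V)‖ :=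
          chain ▸ ContinuousMultilinearMap.norm_compContinuousLinearMap_le _ _
      _ ≤ c * ‖u • η‖ ^ (-(n : ℝ)) * ∏ _ : Fin n, u := by
          have := hm.norm_iteratedFDeriv_le (u • η) (smul_ne_zero hu.ne' hη) n hn
          have := (norm_nonneg _).trans this
          gcongr
      _ = c * ‖η‖ ^ (-(n : ℝ)) := by
          rw [norm_smul_of_nonneg hu.le, mul_rpow hu.le (norm_nonneg η), Finset.prod_const,
            Finset.card_univ, Fintype.card_fin, rpow_neg hu.le, rpow_natCast]
          field_simp

end IsMikhlinSymbol

end MikhlinSymbol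

section LocalizedSymbol

/-- The annulus `1 ≤ ‖η‖ ≤ 2`, on which the unit-scale piece of a symbol lives. -/
def unitAnnulus (V : Type*) [NormedAddCommGroup V] : Set V := {η | 1 ≤ ‖η‖ ∧ ‖η‖ ≤ 2}

section NormedSpace

variable {V F : Type*} [NormedAddCommGroup V] [NormedAddCommGroup F] [NormedSpace ℝ F]

/-- The unit-scale piece of the symbol `‖η‖ e ^ (-T ‖η‖) m η`; the factor `‖η‖` is absorbed by the
integration over scales. -/
noncomputable def localizedSymbol (T : ℝ) (m : V → F) (η : V) : F :=
  scaleCutoff ‖η‖⁻¹ • rexp (-T * ‖η‖) • m η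

lemma unitAnnulus_subset_compl_zero : unitAnnulus V ⊆ {0}ᶜ := fun _ hη =>
  norm_pos_iff.1 (one_pos.trans_le hη.1)

lemma isClosed_unitAnnulus : IsClosed (unitAnnulus V) :=
  (isClosed_le continuous_const continuous_norm).inter
    (isClosed_le continuous_norm continuous_const)

lemma isCompact_unitAnnulus [ProperSpace V] : IsCompact (unitAnnulus V) :=
  (isCompact_closedBall 0 2).of_isClosed_subset isClosed_unitAnnulus fun _ hη =>
    mem_closedBall_zero_iff.2 hη.2

lemma tsupport_localizedSymbol_subset (T : ℝ) (m : V → F) :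
    tsupport (localizedSymbol T m) ⊆ unitAnnulus V := by
  refine closure_minimal (fun η hη => ?_) isClosed_unitAnnulus
  have hsupp : ‖η‖⁻¹ ∈ Ioo (1 / 2) 1 := by
    rw [← support_scaleCutoff]
    exact fun h => hη (by rw [localizedSymbol, h, zero_smul])
  have hpos : 0 < ‖η‖ := inv_pos.1 (by linarith [hsupp.1])
  refine ⟨((inv_lt_one₀ hpos).1 hsupp.2).le, ?_⟩
  simpa using ((lt_inv_comm₀ (by simp) hpos).1 hsupp.1).le

end NormedSpace

variable {V F : Type*} [NormedAddCommGroup V] [InnerProductSpace ℝ V] [NormedAddCommGroup F]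
  [NormedSpace ℝ F] {k : ℕ} {c : ℝ} {m : V → F}

lemma contDiffOn_norm_compl_zero : ContDiffOn ℝ k (fun η : V => ‖η‖) {0}ᶜ :=
  contDiffOn_id.norm ℝ fun _ hη => hη

lemma contDiffOn_scaleCutoff_inv_norm :
    ContDiffOn ℝ k (fun η : V => scaleCutoff ‖η‖⁻¹) {0}ᶜ :=
  (contDiff_scaleCutoff (n := k)).comp_contDiffOn
    (contDiffOn_norm_compl_zero.inv fun _ hη => norm_ne_zero_iff.2 hη)

lemma contDiffOn_exp_neg_mul_norm (T : ℝ) :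
    ContDiffOn ℝ k (fun η : V => rexp (-T * ‖η‖)) {0}ᶜ :=
  (contDiffOn_const.mul contDiffOn_norm_compl_zero).exp

lemma contDiff_localizedSymbol (T : ℝ) (hm : ContDiffOn ℝ k m {0}ᶜ) :
    ContDiff ℝ k (localizedSymbol T m) :=
  contMDiff_iff_contDiff.1 <| contMDiff_of_tsupport fun _ hη =>
    ((contDiffOn_scaleCutoff_inv_norm.smul
      ((contDiffOn_exp_neg_mul_norm T).smul hm)).contDiffAt (isOpen_compl_singleton.mem_nhds
        (unitAnnulus_subset_compl_zero (tsupport_localizedSymbol_subset T m hη)))).contMDiffAt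

lemma IsMikhlinSymbol.norm_iteratedFDerivWithin_le_of_mem_unitAnnulus
    (hm : IsMikhlinSymbol k c m) {n : ℕ} (hn : n ≤ k) {η : V} (hη : η ∈ unitAnnulus V) :
    ‖iteratedFDerivWithin ℝ n m {0}ᶜ η‖ ≤ c := by
  have hη0 := unitAnnulus_subset_compl_zero hη
  have hc : 0 ≤ c := (norm_nonneg _).trans (hm.norm_le hη0)
  rw [iteratedFDerivWithin_of_isOpen n isOpen_compl_singleton hη0]
  exact (hm.norm_iteratedFDeriv_le η hη0 n hn).trans
    (mul_le_of_le_one_right hc (rpow_le_one_of_one_le_of_nonpos hη.1 (by simp)))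

variable (V k) in
lemma exists_bound_iteratedFDeriv_localizedSymbol [FiniteDimensional ℝ V] :
    ∃ B : ℝ, 0 ≤ B ∧ ∀ (c : ℝ) (m : V → F), IsMikhlinSymbol k c m → ∀ T, 0 ≤ T →
      ∀ n ≤ k, ∀ η ∈ unitAnnulus V,
        ‖iteratedFDeriv ℝ n (localizedSymbol T m) η‖ ≤ B * (c * rexp (-T / 2)) := by
  have hU : UniqueDiffOn ℝ ({0}ᶜ : Set V) := isOpen_compl_singleton.uniqueDiffOn
  obtain ⟨B₁, hB₁, hcutoff⟩ := exists_bound_iteratedFDerivWithin_of_isCompact isCompact_unitAnnulus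
    unitAnnulus_subset_compl_zero hU (contDiffOn_scaleCutoff_inv_norm (V := V) (k := k))
  obtain ⟨B₂, hB₂, hexp⟩ := exists_bound_iteratedFDerivWithin_exp_neg_mul isCompact_unitAnnulus
    unitAnnulus_subset_compl_zero hU (contDiffOn_norm_compl_zero (V := V) (k := k)) fun _ h => h.1
  refine ⟨2 ^ k * B₁ * (2 ^ k * B₂), by positivity, fun c m hm T hT n hn η hη => ?_⟩
  have hη0 := unitAnnulus_subset_compl_zero hη
  rw [← iteratedFDerivWithin_of_isOpen n isOpen_compl_singleton hη0]
  calc ‖iteratedFDerivWithin ℝ n (localizedSymbol T m) {0}ᶜ η‖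
      ≤ 2 ^ k * (B₁ * (2 ^ k * (B₂ * rexp (-T / 2) * c))) :=
        norm_iteratedFDerivWithin_smul_le_of_le hU hη0 contDiffOn_scaleCutoff_inv_norm
          ((contDiffOn_exp_neg_mul_norm T).smul hm.contDiffOn) (fun i hi => hcutoff i hi η hη)
          (fun i hi => norm_iteratedFDerivWithin_smul_le_of_le hU hη0
            (contDiffOn_exp_neg_mul_norm T) hm.contDiffOn (fun j hj => hexp T hT j hj η hη)
            (fun j hj => hm.norm_iteratedFDerivWithin_le_of_mem_unitAnnulus hj hη) hi) hn
    _ = 2 ^ k * B₁ * (2 ^ k * B₂) * (c * rexp (-T / 2)) := by ring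

end LocalizedSymbol

section FourierDecay

variable {V E : Type*} [NormedAddCommGroup V] [InnerProductSpace ℝ V] [FiniteDimensional ℝ V]
  [MeasurableSpace V] [BorelSpace V] [NormedAddCommGroup E] [NormedSpace ℂ E] {k : ℕ}

lemma one_add_norm_pow_mul_norm_fourier_le {h : V → E} (hh : ContDiff ℝ k h)
    (hint : ∀ n ≤ k, Integrable (iteratedFDeriv ℝ n h)) {A : ℝ}
    (hA : ∀ n ≤ k, ∫ η, ‖iteratedFDeriv ℝ n h η‖ ≤ A) (w : V) :
    (1 + ‖w‖) ^ k * ‖𝓕 h w‖ ≤ 2 ^ k * (1 + 2 ^ k * (k + 1)) * A := by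
  have zero_bound : ‖𝓕 h w‖ ≤ A := by
    refine (VectorFourier.norm_fourierIntegral_le_integral_norm _ _ _ _ _).trans ?_
    simpa only [norm_iteratedFDeriv_zero] using hA 0 k.zero_le
  have top_bound : ‖w‖ ^ k * ‖𝓕 h w‖ ≤ 2 ^ k * ((k + 1) * A) := by
    have := Real.pow_mul_norm_iteratedFDeriv_fourier_le (K := 0) (N := k) (k := 0) (n := k) hh
      (fun i n hi hn => by
        obtain rfl : i = 0 := by simpa using hi
        simpa using (hint n (by exact_mod_cast hn)).norm) (by simp) le_rfl w
    rw [norm_iteratedFDeriv_zero] at this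
    refine this.trans ?_
    simp only [Finset.sum_product, Finset.range_one, Finset.sum_singleton, pow_zero, one_mul,
      CharP.cast_eq_zero, mul_zero, zero_add]
    gcongr
    simpa using Finset.sum_le_card_nsmul _ _ A fun n hn =>
      hA n (Nat.lt_succ_iff.1 (Finset.mem_range.1 hn))
  calc (1 + ‖w‖) ^ k * ‖𝓕 h w‖
      ≤ 2 ^ k * (1 ^ k + ‖w‖ ^ k) * ‖𝓕 h w‖ := by
        gcongr
        refine (add_pow_le zero_le_one (norm_nonneg w) k).trans ?_
        gcongr
        exacts [one_le_two, k.sub_le 1]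
    _ = 2 ^ k * (‖𝓕 h w‖ + ‖w‖ ^ k * ‖𝓕 h w‖) := by ring
    _ ≤ 2 ^ k * (A + 2 ^ k * ((k + 1) * A)) := by gcongr
    _ = 2 ^ k * (1 + 2 ^ k * (k + 1)) * A := by ring

lemma integral_cexp_inner_smul_eq_fourier (h : V → E) (y : V) :
    ∫ η, Complex.exp (Complex.I * (⟪y, η⟫ : ℂ)) • h η = 𝓕 h (-(2 * π)⁻¹ • y) := by
  rw [Real.fourier_eq']
  congr 1 with η
  congr 2
  rw [inner_smul_right, real_inner_comm]
  push_cast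
  field_simp

lemma one_add_norm_pow_mul_norm_integral_cexp_inner_smul_le {h : V → E} (hh : ContDiff ℝ k h)
    {K : Set V} (hK : IsCompact K) (hhK : tsupport h ⊆ K) {A : ℝ}
    (hA : ∀ n ≤ k, ∀ η ∈ K, ‖iteratedFDeriv ℝ n h η‖ ≤ A) (y : V) :
    (1 + ‖y‖) ^ k * ‖∫ η, Complex.exp (Complex.I * (⟪y, η⟫ : ℂ)) • h η‖ ≤
      (2 * π) ^ k * (2 ^ k * (1 + 2 ^ k * (k + 1)) * volume.real K) * A := by
  have hcompact : HasCompactSupport h := hK.of_isClosed_subset (isClosed_tsupport h) hhK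
  have hint (n : ℕ) (hn : n ≤ k) : Integrable (iteratedFDeriv ℝ n h) :=
    (hh.continuous_iteratedFDeriv (by exact_mod_cast hn)).integrable_of_hasCompactSupport
      (hcompact.iteratedFDeriv n)
  have integral_le (n : ℕ) (hn : n ≤ k) :
      ∫ η, ‖iteratedFDeriv ℝ n h η‖ ≤ A * volume.real K := by
    rw [← setIntegral_eq_integral_of_forall_compl_eq_zero (s := K) fun η hη =>
      norm_eq_zero.2 (Function.notMem_support.1 fun h' =>
        hη (hhK (support_iteratedFDeriv_subset n h')))]
    exact (le_norm_self _).trans (norm_setIntegral_le_of_norm_le_const hK.measure_lt_top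
      fun η hη => (norm_norm _).trans_le (hA n hn η hη))
  set w := -(2 * π)⁻¹ • y with hw
  have norm_y : ‖y‖ = 2 * π * ‖w‖ := by
    rw [hw, norm_smul, norm_neg, norm_of_nonneg (by positivity)]
    field_simp
  rw [integral_cexp_inner_smul_eq_fourier]
  calc (1 + ‖y‖) ^ k * ‖𝓕 h w‖
      ≤ (2 * π * (1 + ‖w‖)) ^ k * ‖𝓕 h w‖ := by
        gcongr
        rw [norm_y, mul_one_add]
        linarith [pi_gt_three]
    _ = (2 * π) ^ k * ((1 + ‖w‖) ^ k * ‖𝓕 h w‖) := by rw [mul_pow _ (1 + ‖w‖), mul_assoc]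
    _ ≤ (2 * π) ^ k * (2 ^ k * (1 + 2 ^ k * (k + 1)) * (A * volume.real K)) :=
        mul_le_mul_of_nonneg_left (one_add_norm_pow_mul_norm_fourier_le hh hint integral_le w)
          (by positivity)
    _ = _ := by ring

end FourierDecay

section PoissonMajorant

variable {V : Type*} [NormedAddCommGroup V] [InnerProductSpace ℝ V]

/-- The superposition over all scales `u` of the bounds for the scale-`u` pieces of the kernel
`mikhlinPoissonKernel m t x`, with the constant dropped. Up to a constant it is the Poisson-type
kernel `(t + ‖x‖) ^ (-(finrank ℝ V + 1))`, but only the integral form is needed. -/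
noncomputable def poissonMajorant (x : V) (t : ℝ) : ℝ≥0∞ :=
  ∫⁻ u in Ioi 0, ENNReal.ofReal
    (u ^ finrank ℝ V * rexp (-(t * u) / 2) * ((1 + u * ‖x‖) ^ (finrank ℝ V + 1))⁻¹)

lemma poissonMajorant_sub_comm (x y : V) (t : ℝ) :
    poissonMajorant (x - y) t = poissonMajorant (y - x) t := by
  simp only [poissonMajorant, norm_sub_rev]

@[fun_prop]
lemma measurable_poissonMajorant [MeasurableSpace V] [BorelSpace V] :
    Measurable fun p : V × ℝ => poissonMajorant p.1 p.2 := by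
  have : Measurable fun p : (V × ℝ) × ℝ => ENNReal.ofReal (p.2 ^ finrank ℝ V *
      rexp (-(p.1.2 * p.2) / 2) * ((1 + p.2 * ‖p.1.1‖) ^ (finrank ℝ V + 1))⁻¹) := by
    fun_prop
  exact this.lintegral_prod_right'

end PoissonMajorant

section MikhlinPoissonKernel

variable {V : Type*} [NormedAddCommGroup V] [InnerProductSpace ℝ V] [FiniteDimensional ℝ V]
  [MeasurableSpace V] [BorelSpace V]

/-- The inverse Fourier transform (without the factor `(2π) ^ (-finrank ℝ V)`) of the symbol
`m ξ ‖ξ‖ e ^ (-t ‖ξ‖)`. -/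
noncomputable def mikhlinPoissonKernel (m : V → ℂ) (t : ℝ) (x : V) : ℂ :=
  ∫ ξ, Complex.exp (Complex.I * (⟪x, ξ⟫ : ℂ)) * m ξ * (‖ξ‖ : ℂ) *
    Complex.exp (-(‖ξ‖ : ℂ) * (t : ℂ))

lemma integrable_norm_mul_exp_neg_mul_norm {t : ℝ} (ht : 0 < t) :
    Integrable fun ξ : V => ‖ξ‖ * rexp (-t * ‖ξ‖) := by
  cases subsingleton_or_nontrivial V
  · simp [Subsingleton.elim _ (0 : V)]
  · rw [integrable_fun_norm_addHaar volume (f := fun r => r * rexp (-t * r))]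
    refine (integrableOn_rpow_mul_exp_neg_mul_rpow (s := finrank ℝ V) (p := 1) ?_ one_pos
      ht).congr_fun (fun r _ => ?_) measurableSet_Ioi
    · have : (0 : ℝ) ≤ finrank ℝ V := Nat.cast_nonneg _
      linarith
    · simp only [rpow_natCast, rpow_one, smul_eq_mul]
      rw [← mul_assoc, pow_sub_one_mul finrank_pos.ne']

variable {k : ℕ} {c : ℝ} {m : V → ℂ}

lemma IsMikhlinSymbol.integrable_mul_norm_mul_cexp (hm : IsMikhlinSymbol k c m) {t : ℝ}
    (ht : 0 < t) :
    Integrable fun ξ => m ξ * (‖ξ‖ : ℂ) * Complex.exp (-(‖ξ‖ : ℂ) * (t : ℂ)) := by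
  refine ((integrable_norm_mul_exp_neg_mul_norm ht).const_mul c).mono' ?_ (.of_forall fun ξ => ?_)
  · have := hm.measurable
    fun_prop
  · rcases eq_or_ne ξ 0 with rfl | hξ
    · simp
    · rw [norm_mul, norm_mul, Complex.norm_real, norm_norm, Complex.norm_exp, mul_assoc]
      have := hm.norm_le hξ
      have exponent : (-(‖ξ‖ : ℂ) * (t : ℂ)).re = -t * ‖ξ‖ := by
        rw [← Complex.ofReal_neg, ← Complex.ofReal_mul, Complex.ofReal_re]
        ring
      rw [exponent]
      gcongr

lemma mikhlinPoissonKernel_eq_integral_norm_smul (m : V → ℂ) (t : ℝ) (x : V) :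
    mikhlinPoissonKernel m t x =
      ∫ ξ, ‖ξ‖ • Complex.exp (Complex.I * (⟪x, ξ⟫ : ℂ)) • rexp (-t * ‖ξ‖) • m ξ := by
  refine integral_congr_ae (.of_forall fun ξ => ?_)
  simp only [Complex.real_smul, smul_eq_mul, Complex.ofReal_exp]
  push_cast
  ring_nf

lemma IsMikhlinSymbol.mikhlinPoissonKernel_eq_integral_scales (hm : IsMikhlinSymbol k c m) {t : ℝ}
    (ht : 0 < t) (x : V) :
    mikhlinPoissonKernel m t x = ∫ u in Ioi 0, ∫ ξ, scaleCutoff (u / ‖ξ‖) •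
      Complex.exp (Complex.I * (⟪x, ξ⟫ : ℂ)) • rexp (-t * ‖ξ‖) • m ξ := by
  rw [mikhlinPoissonKernel_eq_integral_norm_smul]
  have := hm.measurable
  refine integral_norm_smul_eq_integral_scaleCutoff
    (g := fun ξ => Complex.exp (Complex.I * (⟪x, ξ⟫ : ℂ)) • rexp (-t * ‖ξ‖) • m ξ)
    (by fun_prop) ?_
  refine ((hm.integrable_mul_norm_mul_cexp ht).bdd_mul (c := 1)
    (f := fun ξ => Complex.exp (Complex.I * (⟪x, ξ⟫ : ℂ))) (by fun_prop)
    (.of_forall fun ξ => (mul_comm Complex.I _ ▸ Complex.norm_exp_ofReal_mul_I _).le)).congr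
    (.of_forall fun ξ => ?_)
  simp only [Complex.real_smul, smul_eq_mul, Complex.ofReal_exp]
  push_cast
  ring_nf

lemma integral_scaleCutoff_smul_eq (m : V → ℂ) (t : ℝ) (x : V) {u : ℝ} (hu : 0 < u) :
    ∫ ξ, scaleCutoff (u / ‖ξ‖) •
        Complex.exp (Complex.I * (⟪x, ξ⟫ : ℂ)) • rexp (-t * ‖ξ‖) • m ξ =
      u ^ finrank ℝ V • ∫ η, Complex.exp (Complex.I * (⟪u • x, η⟫ : ℂ)) •
        localizedSymbol (t * u) (fun η => m (u • η)) η := by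
  have rescale := Measure.integral_comp_smul volume (fun ξ => scaleCutoff (u / ‖ξ‖) •
    Complex.exp (Complex.I * (⟪x, ξ⟫ : ℂ)) • rexp (-t * ‖ξ‖) • m ξ) u
  rw [abs_of_pos (by positivity), eq_inv_smul_iff₀ (by positivity)] at rescale
  rw [← rescale]
  congr 2 with η
  rw [localizedSymbol, smul_comm, norm_smul_of_nonneg hu.le, inner_smul_right, real_inner_smul_left,
    ← div_div, div_self hu.ne', one_div, ← mul_assoc, neg_mul_eq_neg_mul]

lemma exists_bound_integral_scaleCutoff_smul (V : Type*) [NormedAddCommGroup V]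
    [InnerProductSpace ℝ V] [FiniteDimensional ℝ V] [MeasurableSpace V] [BorelSpace V] (k : ℕ) :
    ∃ B : ℝ≥0, ∀ (c : ℝ) (m : V → ℂ), IsMikhlinSymbol k c m → ∀ t, 0 ≤ t → ∀ x, ∀ u, 0 < u →
      ‖∫ ξ, scaleCutoff (u / ‖ξ‖) •
          Complex.exp (Complex.I * (⟪x, ξ⟫ : ℂ)) • rexp (-t * ‖ξ‖) • m ξ‖ ≤
        B * (c * (u ^ finrank ℝ V * rexp (-(t * u) / 2) * ((1 + u * ‖x‖) ^ k)⁻¹)) := by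
  obtain ⟨B, hB, hderiv⟩ := exists_bound_iteratedFDeriv_localizedSymbol (F := ℂ) V k
  refine ⟨((2 * π) ^ k * (2 ^ k * (1 + 2 ^ k * (k + 1)) *
    volume.real (unitAnnulus V)) * B).toNNReal, fun c m hm t ht x u hu => ?_⟩
  have decay := one_add_norm_pow_mul_norm_integral_cexp_inner_smul_le
    (contDiff_localizedSymbol (t * u) (hm.comp_smul hu).contDiffOn) isCompact_unitAnnulus
    (tsupport_localizedSymbol_subset _ _)
    (hderiv c _ (hm.comp_smul hu) (t * u) (by positivity)) (u • x)
  rw [norm_smul_of_nonneg hu.le, ← le_inv_mul_iff₀ (by positivity)] at decay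
  rw [integral_scaleCutoff_smul_eq m t x hu, norm_smul_of_nonneg (by positivity)]
  refine (mul_le_mul_of_nonneg_left decay (by positivity)).trans_eq ?_
  rw [Real.coe_toNNReal _ (by positivity)]
  ring

lemma exists_bound_enorm_mikhlinPoissonKernel (V : Type*) [NormedAddCommGroup V]
    [InnerProductSpace ℝ V] [FiniteDimensional ℝ V] [MeasurableSpace V] [BorelSpace V] :
    ∃ B : ℝ≥0, ∀ (c : ℝ) (m : V → ℂ), IsMikhlinSymbol (finrank ℝ V + 1) c m → ∀ t, 0 < t → ∀ x,
      ‖mikhlinPoissonKernel m t x‖ₑ ≤ B * ENNReal.ofReal c * poissonMajorant x t := by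
  obtain ⟨B, hB⟩ := exists_bound_integral_scaleCutoff_smul V (finrank ℝ V + 1)
  refine ⟨B, fun c m hm t ht x => ?_⟩
  rw [hm.mikhlinPoissonKernel_eq_integral_scales ht, poissonMajorant,
    ← lintegral_const_mul' _ _ (by finiteness)]
  refine (enorm_integral_le_lintegral_enorm _).trans
    (setLIntegral_mono' measurableSet_Ioi fun u (hu : 0 < u) => ?_)
  rw [← ofReal_norm, ← ENNReal.ofReal_coe_nnreal, ← ENNReal.ofReal_mul B.coe_nonneg,
    ← ENNReal.ofReal_mul' (by positivity), mul_assoc]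
  exact ENNReal.ofReal_le_ofReal (hB c m hm t ht.le x u hu)

end MikhlinPoissonKernel

section HalfSpace

/-- The half-space `V × (0, ∞)`. -/
def upperHalfSpace (V : Type*) : Set (V × ℝ) := {p | 0 < p.2}

lemma measurableSet_upperHalfSpace {V : Type*} [MeasurableSpace V] :
    MeasurableSet (upperHalfSpace V) :=
  measurableSet_lt measurable_const measurable_snd

variable {V : Type*} [MeasureSpace V] [SFinite (volume : Measure V)]

lemma volume_restrict_upperHalfSpace :
    (volume : Measure (V × ℝ)).restrict (upperHalfSpace V) =
      volume.prod (volume.restrict (Ioi 0)) := by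
  have : upperHalfSpace V = univ ×ˢ Ioi 0 := by
    ext p
    simp [upperHalfSpace]
  rw [this, Measure.volume_eq_prod, ← Measure.prod_restrict, Measure.restrict_univ]

lemma measurePreserving_mul_snd_upperHalfSpace {ς : ℝ} (hς : ς = 1 ∨ ς = -1) :
    MeasurePreserving (fun w : V × ℝ => (w.1, ς * w.2)) (volume.restrict (upperHalfSpace V))
      (volume.restrict {p | 0 < ς * p.2}) := by
  have sq_sign : ς * ς = 1 := by rcases hς with rfl | rfl <;> norm_num
  have preserving_mul : MeasurePreserving (fun y : ℝ => ς * y) := by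
    rcases hς with rfl | rfl
    · simp only [one_mul]
      exact .id volume
    · simpa only [neg_one_mul] using Measure.measurePreserving_neg (volume : Measure ℝ)
  have preserving : MeasurePreserving (fun w : V × ℝ => (w.1, ς * w.2)) volume volume :=
    (MeasurePreserving.id volume).prod preserving_mul
  convert preserving.restrict_preimage (s := {p | 0 < ς * p.2})
    (measurableSet_lt measurable_const (by fun_prop)) using 2
  ext w
  simp only [upperHalfSpace, mem_ofPred_eq, mem_preimage, ← mul_assoc, sq_sign, one_mul]

end HalfSpace

section MajorantIntegrals

variable {V : Type*} [NormedAddCommGroup V] [InnerProductSpace ℝ V] [FiniteDimensional ℝ V]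
  [MeasurableSpace V] [BorelSpace V]

lemma lintegral_comp_smul_of_pos {f : V → ℝ≥0∞} (hf : Measurable f) {u : ℝ} (hu : 0 < u) :
    ENNReal.ofReal (u ^ finrank ℝ V) * ∫⁻ z, f (u • z) = ∫⁻ z, f z := by
  rw [← lintegral_map hf (measurable_const_smul u), Measure.map_addHaar_smul volume hu.ne',
    lintegral_smul_measure, smul_eq_mul, ← mul_assoc, ← ENNReal.ofReal_mul (by positivity),
    abs_of_pos (by positivity), mul_inv_cancel₀ (by positivity), ENNReal.ofReal_one, one_mul]

lemma lintegral_one_add_norm_pow_inv_lt_top :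
    ∫⁻ z : V, ENNReal.ofReal ((1 + ‖z‖) ^ (finrank ℝ V + 1))⁻¹ < ∞ := by
  have := finite_integral_one_add_norm (E := V) (μ := volume) (r := finrank ℝ V + 1) (by simp)
  refine (lintegral_congr fun z => ?_).trans_lt this
  rw [rpow_neg (by positivity)]
  norm_cast

lemma lintegral_exp_neg_mul_Ioi {b : ℝ} (hb : 0 < b) :
    ∫⁻ u in Ioi 0, ENNReal.ofReal (rexp (-b * u)) = ENNReal.ofReal b⁻¹ := by
  rw [← ofReal_integral_eq_lintegral_ofReal (integrableOn_exp_mul_Ioi (neg_neg_of_pos hb) 0)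
    (.of_forall fun u => (Real.exp_pos _).le), integral_exp_mul_Ioi (neg_neg_of_pos hb)]
  simp

lemma lintegral_poissonMajorant {t : ℝ} (ht : 0 < t) :
    ∫⁻ x : V, poissonMajorant x t =
      (∫⁻ z : V, ENNReal.ofReal ((1 + ‖z‖) ^ (finrank ℝ V + 1))⁻¹) * ENNReal.ofReal (2 / t) := by
  have factor {u : ℝ} (hu : 0 < u) (x : V) :
      ENNReal.ofReal (u ^ finrank ℝ V * rexp (-(t * u) / 2) *
        ((1 + u * ‖x‖) ^ (finrank ℝ V + 1))⁻¹) =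
      ENNReal.ofReal (rexp (-(t / 2) * u)) * (ENNReal.ofReal (u ^ finrank ℝ V) *
        ENNReal.ofReal ((1 + ‖u • x‖) ^ (finrank ℝ V + 1))⁻¹) := by
    rw [← ENNReal.ofReal_mul (by positivity), ← ENNReal.ofReal_mul (by positivity),
      norm_smul_of_nonneg hu.le]
    ring_nf
  calc ∫⁻ x : V, poissonMajorant x t
      = ∫⁻ u in Ioi 0, ∫⁻ x : V, ENNReal.ofReal (u ^ finrank ℝ V * rexp (-(t * u) / 2) *
          ((1 + u * ‖x‖) ^ (finrank ℝ V + 1))⁻¹) :=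
        lintegral_lintegral_swap (by fun_prop)
    _ = ∫⁻ u in Ioi 0, ENNReal.ofReal (rexp (-(t / 2) * u)) *
          ∫⁻ z : V, ENNReal.ofReal ((1 + ‖z‖) ^ (finrank ℝ V + 1))⁻¹ := by
        refine setLIntegral_congr_fun measurableSet_Ioi fun u (hu : 0 < u) => ?_
        simp only [factor hu]
        rw [lintegral_const_mul _ (by fun_prop), lintegral_const_mul _ (by fun_prop),
          lintegral_comp_smul_of_pos
            (f := fun z : V => ENNReal.ofReal ((1 + ‖z‖) ^ (finrank ℝ V + 1))⁻¹) (by fun_prop) hu]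
    _ = _ := by
        rw [lintegral_mul_const _ (by fun_prop), lintegral_exp_neg_mul_Ioi (by positivity),
          inv_div, mul_comm]

lemma lintegral_rpow_neg_div_add {a s : ℝ} (ha : a ∈ Ioo 0 1) (hs : 0 < s) :
    ∫⁻ y in Ioi 0, ENNReal.ofReal (y ^ (-a) / (s + y)) =
      ENNReal.ofReal (s ^ (-a) * ∫ y in Ioi 0, Real.rpowIntegrand₀₁ (1 - a) y 1) := by
  have hp : 1 - a ∈ Ioo (0 : ℝ) 1 := ⟨by linarith [ha.2], by linarith [ha.1]⟩
  have integrand_eq : ∀ y ∈ Ioi (0 : ℝ),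
      s⁻¹ * Real.rpowIntegrand₀₁ (1 - a) y s = y ^ (-a) / (s + y) := fun y (hy : 0 < y) => by
    rw [Real.rpowIntegrand₀₁_eq_pow_div hp hy.le hs.le, sub_sub_cancel_left, add_comm s]
    field_simp
  have integrable : IntegrableOn (fun y => s⁻¹ * Real.rpowIntegrand₀₁ (1 - a) y s) (Ioi 0) :=
    (Real.integrableOn_rpowIntegrand₀₁_Ioi hp hs.le).const_mul s⁻¹
  calc ∫⁻ y in Ioi 0, ENNReal.ofReal (y ^ (-a) / (s + y))
      = ENNReal.ofReal (∫ y in Ioi 0, y ^ (-a) / (s + y)) := by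
        refine (ofReal_integral_eq_lintegral_ofReal
          (integrable.congr_fun integrand_eq measurableSet_Ioi) ?_).symm
        filter_upwards [ae_restrict_mem measurableSet_Ioi] with y (hy : 0 < y)
        positivity
    _ = _ := by
        rw [← setIntegral_congr_fun measurableSet_Ioi integrand_eq, integral_const_mul,
          Real.integral_rpowIntegrand₀₁_eq_rpow_mul_const hp hs.le, ← mul_assoc,
          ← rpow_neg_one s, ← rpow_add hs]
        ring_nf

lemma exists_bound_lintegral_poissonMajorant_mul_rpow (V : Type*) [NormedAddCommGroup V]
    [InnerProductSpace ℝ V] [FiniteDimensional ℝ V] [MeasurableSpace V] [BorelSpace V] {a : ℝ}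
    (ha : a ∈ Ioo 0 1) :
    ∃ A : ℝ≥0∞, A ≠ ∞ ∧ ∀ (x : V) (s : ℝ), 0 < s →
      ∫⁻ w in upperHalfSpace V, poissonMajorant (x - w.1) (s + w.2) * ENNReal.ofReal (w.2 ^ (-a)) ≤
        A * ENNReal.ofReal (s ^ (-a)) := by
  set I := ∫⁻ z : V, ENNReal.ofReal ((1 + ‖z‖) ^ (finrank ℝ V + 1))⁻¹
  set J := ∫ y in Ioi 0, Real.rpowIntegrand₀₁ (1 - a) y 1
  have hI : I ≠ ∞ := lintegral_one_add_norm_pow_inv_lt_top.ne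
  refine ⟨I * 2 * ENNReal.ofReal J, by finiteness, fun x s hs => le_of_eq ?_⟩
  have tangential_integral : ∀ y ∈ Ioi (0 : ℝ),
      ∫⁻ z : V, poissonMajorant (x - z) (s + y) * ENNReal.ofReal (y ^ (-a)) =
        I * 2 * ENNReal.ofReal (y ^ (-a) / (s + y)) := fun y (hy : 0 < y) => by
    rw [lintegral_mul_const _ (by fun_prop), lintegral_sub_left_eq_self
      (fun z => poissonMajorant z (s + y)), lintegral_poissonMajorant (add_pos hs hy), mul_assoc,
      ← ENNReal.ofReal_mul (by positivity), div_mul_eq_mul_div, mul_div_assoc,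
      ENNReal.ofReal_mul two_pos.le, ENNReal.ofReal_ofNat, mul_assoc]
  rw [volume_restrict_upperHalfSpace, lintegral_prod_symm _ (by fun_prop),
    setLIntegral_congr_fun measurableSet_Ioi tangential_integral,
    lintegral_const_mul' _ _ (by finiteness), lintegral_rpow_neg_div_add ha hs,
    mul_comm (s ^ (-a)), ENNReal.ofReal_mul' (by positivity), mul_assoc (I * 2)]

end MajorantIntegrals

section SchurTest

variable {X Y : Type*} [MeasurableSpace X] [MeasurableSpace Y] {μ : Measure X} {ν : Measure Y}
  {p q : ℝ}

lemma lintegral_rpow_le_mul_lintegral_div_rpow (hpq : p.HolderConjugate q) {φ h : Y → ℝ≥0∞}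
    (hφ : AEMeasurable φ ν) (hφ0 : ∀ᵐ y ∂ν, φ y ≠ 0) (hφ_top : ∀ᵐ y ∂ν, φ y ≠ ∞)
    (hh : AEMeasurable h ν) :
    (∫⁻ y, h y ∂ν) ^ q ≤ (∫⁻ y, φ y ^ p ∂ν) ^ (q / p) * ∫⁻ y, (h y / φ y) ^ q ∂ν := by
  have hq0 := hpq.symm.pos
  calc (∫⁻ y, h y ∂ν) ^ q = (∫⁻ y, (φ * fun y => h y / φ y) y ∂ν) ^ q := by
        congr 1
        refine lintegral_congr_ae ?_
        filter_upwards [hφ0, hφ_top] with y h0 h_top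
        exact (ENNReal.mul_div_cancel h0 h_top).symm
    _ ≤ ((∫⁻ y, φ y ^ p ∂ν) ^ (1 / p) * (∫⁻ y, (h y / φ y) ^ q ∂ν) ^ (1 / q)) ^ q := by
        gcongr
        exact ENNReal.lintegral_mul_le_Lp_mul_Lq ν hpq hφ (hh.div hφ)
    _ = (∫⁻ y, φ y ^ p ∂ν) ^ (q / p) * ∫⁻ y, (h y / φ y) ^ q ∂ν := by
        rw [ENNReal.mul_rpow_of_nonneg _ _ hq0.le, ← ENNReal.rpow_mul, ← ENNReal.rpow_mul,
          one_div_mul_cancel hq0.ne', ENNReal.rpow_one, one_div_mul_eq_div]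

lemma lintegral_mul_rpow_le_mul_lintegral_mul_div_rpow (hpq : p.HolderConjugate q)
    {k φ h : Y → ℝ≥0∞} (hk : AEMeasurable k ν) (hφ : AEMeasurable φ ν)
    (hφ0 : ∀ᵐ y ∂ν, φ y ≠ 0) (hφ_top : ∀ᵐ y ∂ν, φ y ≠ ∞) (hh : AEMeasurable h ν) :
    (∫⁻ y, k y * h y ∂ν) ^ q ≤
      (∫⁻ y, k y * φ y ^ p ∂ν) ^ (q / p) * ∫⁻ y, k y * (h y / φ y) ^ q ∂ν := by
  have density {g : Y → ℝ≥0∞} (hg : AEMeasurable g ν) :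
      ∫⁻ y, g y ∂ν.withDensity k = ∫⁻ y, k y * g y ∂ν :=
    lintegral_withDensity_eq_lintegral_mul₀ hk hg
  have hac := withDensity_absolutelyContinuous ν k
  rw [← density hh, ← density (hφ.pow_const p),
    ← density (g := fun y => (h y / φ y) ^ q) ((hh.div hφ).pow_const q)]
  exact lintegral_rpow_le_mul_lintegral_div_rpow hpq (hφ.mono_ac hac) (hac hφ0) (hac hφ_top)
    (hh.mono_ac hac)

variable [SFinite μ] [SFinite ν] {k : X → Y → ℝ≥0∞} {φ : Y → ℝ≥0∞} {ψ : X → ℝ≥0∞} {A B : ℝ≥0∞}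

lemma lintegral_lintegral_mul_le_of_weight (hk : Measurable (Function.uncurry k))
    (hψ : AEMeasurable ψ μ) {g : Y → ℝ≥0∞} (hg : AEMeasurable g ν) {w : Y → ℝ≥0∞}
    (hkψ : ∀ᵐ y ∂ν, ∫⁻ x, k x y * ψ x ∂μ ≤ w y) :
    ∫⁻ x, ψ x * ∫⁻ y, k x y * g y ∂ν ∂μ ≤ ∫⁻ y, w y * g y ∂ν :=
  calc ∫⁻ x, ψ x * ∫⁻ y, k x y * g y ∂ν ∂μ
      = ∫⁻ x, ∫⁻ y, ψ x * (k x y * g y) ∂ν ∂μ := by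
        refine lintegral_congr fun x => (lintegral_const_mul'' _ ?_).symm
        exact (hk.comp measurable_prodMk_left).aemeasurable.mul hg
    _ = ∫⁻ y, ∫⁻ x, ψ x * (k x y * g y) ∂μ ∂ν :=
        lintegral_lintegral_swap (hψ.comp_fst.mul (hk.aemeasurable.mul hg.comp_snd))
    _ = ∫⁻ y, (∫⁻ x, k x y * ψ x ∂μ) * g y ∂ν := by
        refine lintegral_congr fun y => ?_
        have hky : AEMeasurable (fun x => k x y) μ :=
          (hk.comp measurable_prodMk_right).aemeasurable
        rw [← lintegral_mul_const'' (f := fun x => k x y * ψ x) _ (hky.mul hψ)]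
        exact lintegral_congr fun x => by ring
    _ ≤ ∫⁻ y, w y * g y ∂ν := by
        refine lintegral_mono_ae ?_
        filter_upwards [hkψ] with y hy
        gcongr

/-- Schur's test: Hölder's inequality against the weight `φ`, then Tonelli's theorem. -/
lemma lintegral_rpow_lintegral_mul_le_of_schur (hpq : p.HolderConjugate q)
    (hk : Measurable (Function.uncurry k)) (hφ : AEMeasurable φ ν) (hφ0 : ∀ᵐ y ∂ν, φ y ≠ 0)
    (hφ_top : ∀ᵐ y ∂ν, φ y ≠ ∞) (hψ : AEMeasurable ψ μ)
    (hkφ : ∀ᵐ x ∂μ, ∫⁻ y, k x y * φ y ^ p ∂ν ≤ A * ψ x ^ p)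
    (hkψ : ∀ᵐ y ∂ν, ∫⁻ x, k x y * ψ x ^ q ∂μ ≤ B * φ y ^ q)
    {h : Y → ℝ≥0∞} (hh : AEMeasurable h ν) :
    ∫⁻ x, (∫⁻ y, k x y * h y ∂ν) ^ q ∂μ ≤ A ^ (q / p) * B * ∫⁻ y, h y ^ q ∂ν := by
  have hp0 := hpq.pos
  have hq0 := hpq.symm.pos
  have holder : ∀ᵐ x ∂μ, (∫⁻ y, k x y * h y ∂ν) ^ q ≤
      A ^ (q / p) * (ψ x ^ q * ∫⁻ y, k x y * (h y / φ y) ^ q ∂ν) := by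
    filter_upwards [hkφ] with x hx
    have hkx : AEMeasurable (k x) ν := (hk.comp measurable_prodMk_left).aemeasurable
    refine (lintegral_mul_rpow_le_mul_lintegral_mul_div_rpow hpq hkx hφ hφ0 hφ_top hh).trans ?_
    rw [← mul_assoc]
    gcongr
    calc (∫⁻ y, k x y * φ y ^ p ∂ν) ^ (q / p) ≤ (A * ψ x ^ p) ^ (q / p) := by gcongr
      _ = A ^ (q / p) * ψ x ^ q := by
        rw [ENNReal.mul_rpow_of_nonneg _ _ (by positivity), ← ENNReal.rpow_mul,
          mul_div_cancel₀ _ hp0.ne']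
  calc ∫⁻ x, (∫⁻ y, k x y * h y ∂ν) ^ q ∂μ
      ≤ ∫⁻ x, A ^ (q / p) * (ψ x ^ q * ∫⁻ y, k x y * (h y / φ y) ^ q ∂ν) ∂μ :=
        lintegral_mono_ae holder
    _ = A ^ (q / p) * ∫⁻ x, ψ x ^ q * ∫⁻ y, k x y * (h y / φ y) ^ q ∂ν ∂μ :=
        lintegral_const_mul'' _ ((hψ.pow_const q).mul (AEMeasurable.lintegral_prod_right'
          (hk.aemeasurable.mul ((hh.div hφ).pow_const q).comp_snd)))
    _ ≤ A ^ (q / p) * ∫⁻ y, B * φ y ^ q * (h y / φ y) ^ q ∂ν := by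
        gcongr
        exact lintegral_lintegral_mul_le_of_weight hk (hψ.pow_const q)
          ((hh.div hφ).pow_const q) hkψ
    _ = A ^ (q / p) * ∫⁻ y, B * h y ^ q ∂ν := by
        congr 1
        refine lintegral_congr_ae ?_
        filter_upwards [hφ0, hφ_top] with y h0 h_top
        rw [mul_assoc, ← ENNReal.mul_rpow_of_nonneg _ _ hq0.le, ENNReal.mul_div_cancel h0 h_top]
    _ = A ^ (q / p) * B * ∫⁻ y, h y ^ q ∂ν := by
        rw [lintegral_const_mul'' _ (hh.pow_const q), mul_assoc]

end SchurTest

section MajorantBound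

lemma exists_bound_lintegral_poissonMajorant_mul_rpow_rpow (V : Type*) [NormedAddCommGroup V]
    [InnerProductSpace ℝ V] [FiniteDimensional ℝ V] [MeasurableSpace V] [BorelSpace V] {a r : ℝ}
    (har : a * r ∈ Ioo 0 1) :
    ∃ A : ℝ≥0∞, A ≠ ∞ ∧ ∀ x ∈ upperHalfSpace V,
      ∫⁻ w in upperHalfSpace V,
          poissonMajorant (x.1 - w.1) (x.2 + w.2) * ENNReal.ofReal (w.2 ^ (-a)) ^ r ≤
        A * ENNReal.ofReal (x.2 ^ (-a)) ^ r := by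
  obtain ⟨A, hA, weight_le⟩ := exists_bound_lintegral_poissonMajorant_mul_rpow V har
  have rpow_rpow : ∀ w ∈ upperHalfSpace V,
      ENNReal.ofReal (w.2 ^ (-a)) ^ r = ENNReal.ofReal (w.2 ^ (-(a * r))) :=
    fun w (hw : 0 < w.2) => by
      rw [ENNReal.ofReal_rpow_of_pos (by positivity), ← Real.rpow_mul hw.le, neg_mul]
  refine ⟨A, hA, fun x hx => ?_⟩
  rw [rpow_rpow x hx]
  refine (setLIntegral_congr_fun measurableSet_upperHalfSpace fun w hw => ?_).trans_le
    (weight_le x.1 x.2 hx)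
  simp only [rpow_rpow w hw]

lemma exists_bound_lintegral_rpow_poissonMajorant (V : Type*) [NormedAddCommGroup V]
    [InnerProductSpace ℝ V] [FiniteDimensional ℝ V] [MeasurableSpace V] [BorelSpace V] {q : ℝ}
    (hq : 1 < q) :
    ∃ A : ℝ≥0∞, A ≠ ∞ ∧ ∀ h : V × ℝ → ℝ≥0∞, AEMeasurable h (volume.restrict (upperHalfSpace V)) →
      ∫⁻ x in upperHalfSpace V,
          (∫⁻ w in upperHalfSpace V, poissonMajorant (x.1 - w.1) (x.2 + w.2) * h w) ^ q ≤
        A * ∫⁻ w in upperHalfSpace V, h w ^ q := by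
  set p := q.conjExponent
  have hpq : p.HolderConjugate q := (Real.HolderConjugate.conjExponent hq).symm
  have hp0 := hpq.pos
  have hq0 := hpq.symm.pos
  have p_mem : (p * q)⁻¹ * p ∈ Ioo (0 : ℝ) 1 := by
    rw [mul_inv_rev, inv_mul_cancel_right₀ hp0.ne']
    exact ⟨by positivity, inv_lt_one_of_one_lt₀ hq⟩
  have q_mem : (p * q)⁻¹ * q ∈ Ioo (0 : ℝ) 1 := by
    rw [mul_inv, inv_mul_cancel_right₀ hq0.ne']
    exact ⟨by positivity, inv_lt_one_of_one_lt₀ hpq.lt⟩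
  obtain ⟨A, hA, weight_p⟩ := exists_bound_lintegral_poissonMajorant_mul_rpow_rpow V p_mem
  obtain ⟨B, hB, weight_q⟩ := exists_bound_lintegral_poissonMajorant_mul_rpow_rpow V q_mem
  refine ⟨A ^ (q / p) * B, by finiteness, fun h hh => ?_⟩
  have mem_upperHalfSpace := ae_restrict_mem (μ := volume) (measurableSet_upperHalfSpace (V := V))
  have hφ : Measurable fun w : V × ℝ => ENNReal.ofReal (w.2 ^ (-(p * q)⁻¹)) := by fun_prop
  refine lintegral_rpow_lintegral_mul_le_of_schur hpq (by fun_prop) hφ.aemeasurable ?_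
    (.of_forall fun _ => ENNReal.ofReal_ne_top) hφ.aemeasurable
    (mem_upperHalfSpace.mono weight_p) ?_ hh
  · filter_upwards [mem_upperHalfSpace] with w (hw : 0 < w.2)
    exact (ENNReal.ofReal_pos.2 (by positivity)).ne'
  · filter_upwards [mem_upperHalfSpace] with w hw
    simpa only [poissonMajorant_sub_comm w.1, add_comm w.2] using weight_q w hw

end MajorantBound

section MikhlinPoissonOperator

variable {V : Type*} [NormedAddCommGroup V] [InnerProductSpace ℝ V] [FiniteDimensional ℝ V]
  [MeasurableSpace V] [BorelSpace V] {k : ℕ} {c : ℝ} {m : V → ℂ}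

/-- The operator taking `g` on the half-space `V × (0, ∞)` to the function whose partial Fourier
transform at `(ξ, x)` is `∫ y in Ioi 0, m ξ ‖ξ‖ e ^ (-‖ξ‖ (x + y)) ĝ(ξ, y)`. -/
noncomputable def mikhlinPoissonOperator (m : V → ℂ) (g : V × ℝ → ℂ) (p : V × ℝ) : ℂ :=
  ∫ y in Ioi (0 : ℝ), (((2 * π) ^ finrank ℝ V : ℝ) : ℂ)⁻¹ *
    ∫ ξ, Complex.exp (Complex.I * (⟪p.1, ξ⟫ : ℂ)) * m ξ * (‖ξ‖ : ℂ) *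
      Complex.exp (-(‖ξ‖ : ℂ) * ((p.2 : ℂ) + (y : ℂ))) *
      (∫ z, Complex.exp (-Complex.I * (⟪z, ξ⟫ : ℂ)) * g (z, y))

lemma IsMikhlinSymbol.integral_mul_fourier_eq_convolution (hm : IsMikhlinSymbol k c m) {t : ℝ}
    (ht : 0 < t) (x : V) {F : V → ℂ} (hF : Integrable F) :
    ∫ ξ, Complex.exp (Complex.I * (⟪x, ξ⟫ : ℂ)) * m ξ * (‖ξ‖ : ℂ) *
        Complex.exp (-(‖ξ‖ : ℂ) * (t : ℂ)) *
        (∫ z, Complex.exp (-Complex.I * (⟪z, ξ⟫ : ℂ)) * F z) =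
      ∫ z, mikhlinPoissonKernel m t (x - z) * F z := by
  have character (z ξ : V) : Complex.exp (Complex.I * (⟪x - z, ξ⟫ : ℂ)) =
      Complex.exp (Complex.I * (⟪x, ξ⟫ : ℂ)) * Complex.exp (-Complex.I * (⟪z, ξ⟫ : ℂ)) := by
    rw [← Complex.exp_add, inner_sub_left]
    push_cast
    ring_nf
  have integrable : Integrable (Function.uncurry fun ξ z : V =>
      Complex.exp (Complex.I * (⟪x - z, ξ⟫ : ℂ)) *
        (m ξ * (‖ξ‖ : ℂ) * Complex.exp (-(‖ξ‖ : ℂ) * (t : ℂ)) * F z)) (volume.prod volume) :=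
    ((hm.integrable_mul_norm_mul_cexp ht).mul_prod hF).bdd_mul (c := 1)
      (Continuous.aestronglyMeasurable (by fun_prop))
      (.of_forall fun w => (mul_comm Complex.I _ ▸ Complex.norm_exp_ofReal_mul_I _).le)
  simp only [mikhlinPoissonKernel, ← integral_const_mul, ← integral_mul_const]
  refine Eq.trans ?_ ((integral_integral_swap integrable).trans ?_)
  all_goals
    refine integral_congr_ae (.of_forall fun a => integral_congr_ae (.of_forall fun b => ?_))
    simp only [character]
    ring

lemma enorm_two_pi_pow_inv_le_one (n : ℕ) : ‖(((2 * π) ^ n : ℝ) : ℂ)⁻¹‖ₑ ≤ 1 := by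
  rw [← ofReal_norm, ENNReal.ofReal_le_one, norm_inv, Complex.norm_real,
    norm_of_nonneg (by positivity)]
  exact inv_le_one_of_one_le₀ (one_le_pow₀ (by linarith [pi_gt_three]))

lemma IsMikhlinSymbol.enorm_mikhlinPoissonOperator_le (hm : IsMikhlinSymbol k c m) {B : ℝ≥0∞}
    (hB : B ≠ ∞) (hkernel : ∀ t, 0 < t → ∀ x : V,
      ‖mikhlinPoissonKernel m t x‖ₑ ≤ B * poissonMajorant x t) {g : V × ℝ → ℂ}
    (hg : AEStronglyMeasurable g (volume.restrict (upperHalfSpace V)))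
    (hslice : ∀ᵐ y ∂volume.restrict (Ioi 0), Integrable fun z => g (z, y)) {p : V × ℝ}
    (hp : p ∈ upperHalfSpace V) :
    ‖mikhlinPoissonOperator m g p‖ₑ ≤
      B * ∫⁻ w in upperHalfSpace V, poissonMajorant (p.1 - w.1) (p.2 + w.2) * ‖g w‖ₑ := by
  rw [volume_restrict_upperHalfSpace] at hg ⊢
  rw [lintegral_prod_symm _ (by have := hg.enorm; fun_prop), ← lintegral_const_mul' _ _ hB]
  refine (enorm_integral_le_lintegral_enorm _).trans (lintegral_mono_ae ?_)
  filter_upwards [ae_restrict_mem measurableSet_Ioi, hslice] with y (hy : 0 < y) integrable_slice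
  have ht : 0 < p.2 + y := add_pos hp hy
  have convolution := hm.integral_mul_fourier_eq_convolution ht p.1 integrable_slice
  rw [Complex.ofReal_add] at convolution
  rw [convolution, enorm_mul, ← lintegral_const_mul' _ _ hB]
  refine (mul_le_of_le_one_left' (enorm_two_pi_pow_inv_le_one _)).trans
    ((enorm_integral_le_lintegral_enorm _).trans (lintegral_mono fun z => ?_))
  rw [enorm_mul, ← mul_assoc]
  gcongr
  exact hkernel _ ht _

lemma exists_bound_eLpNorm_mikhlinPoissonOperator (V : Type*) [NormedAddCommGroup V]
    [InnerProductSpace ℝ V] [FiniteDimensional ℝ V] [MeasurableSpace V] [BorelSpace V] {q : ℝ}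
    (hq : 1 < q) :
    ∃ C : ℝ≥0, ∀ (c : ℝ) (m : V → ℂ), IsMikhlinSymbol (finrank ℝ V + 1) c m → ∀ g : V × ℝ → ℂ,
      AEStronglyMeasurable g (volume.restrict (upperHalfSpace V)) →
      (∀ᵐ y ∂volume.restrict (Ioi 0), Integrable fun z => g (z, y)) →
        eLpNorm (mikhlinPoissonOperator m g) (ENNReal.ofReal q)
            (volume.restrict (upperHalfSpace V)) ≤
          C * ENNReal.ofReal c *
            eLpNorm g (ENNReal.ofReal q) (volume.restrict (upperHalfSpace V)) := by
  have hq0 : 0 < q := one_pos.trans hq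
  obtain ⟨B, hB⟩ := exists_bound_enorm_mikhlinPoissonKernel V
  obtain ⟨A, hA, hmajorant⟩ := exists_bound_lintegral_rpow_poissonMajorant V hq
  refine ⟨B * (A ^ q⁻¹).toNNReal, fun c m hm g hg hslice => ?_⟩
  have hBc : B * ENNReal.ofReal c ≠ ∞ := by finiteness
  have lintegral_le : ∫⁻ p in upperHalfSpace V, ‖mikhlinPoissonOperator m g p‖ₑ ^ q ≤
      (B * ENNReal.ofReal c) ^ q * (A * ∫⁻ w in upperHalfSpace V, ‖g w‖ₑ ^ q) := by
    refine le_trans ?_ (mul_le_mul_right (hmajorant _ hg.enorm) _)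
    rw [← lintegral_const_mul' _ _ (by finiteness)]
    refine setLIntegral_mono' measurableSet_upperHalfSpace fun p hp => ?_
    rw [← ENNReal.mul_rpow_of_nonneg _ _ hq0.le]
    gcongr
    exact hm.enorm_mikhlinPoissonOperator_le hBc (hB c m hm) hg hslice hp
  rw [eLpNorm_eq_lintegral_rpow_enorm_toReal (by simpa using hq0) ENNReal.ofReal_ne_top,
    eLpNorm_eq_lintegral_rpow_enorm_toReal (by simpa using hq0) ENNReal.ofReal_ne_top,
    ENNReal.toReal_ofReal hq0.le, one_div]
  refine (ENNReal.rpow_le_rpow lintegral_le (by positivity)).trans_eq ?_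
  rw [ENNReal.mul_rpow_of_nonneg _ _ (by positivity), ENNReal.rpow_rpow_inv hq0.ne',
    ENNReal.mul_rpow_of_nonneg _ _ (by positivity), ENNReal.coe_mul,
    ENNReal.coe_toNNReal (by finiteness)]
  ring

end MikhlinPoissonOperator

section LqNorm

variable {α E : Type*} [MeasurableSpace α] {μ : Measure α} [NormedAddCommGroup E] {q : ℝ}
  {f : α → E}

lemma LqNorm_eq_toReal_eLpNorm (hq : 0 < q) (hf : AEStronglyMeasurable f μ) :
    LqNorm μ q f = (eLpNorm f (ENNReal.ofReal q) μ).toReal := by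
  rw [toReal_eLpNorm hf, lpNorm_eq_integral_norm_rpow_toReal (by simpa using hq)
    ENNReal.ofReal_ne_top hf, ENNReal.toReal_ofReal hq.le, LqNorm, one_div]

lemma LqNorm_le_toReal_eLpNorm (hq : 0 < q) :
    LqNorm μ q f ≤ (eLpNorm f (ENNReal.ofReal q) μ).toReal := by
  rw [eLpNorm_eq_lintegral_rpow_enorm_toReal (by simpa using hq) ENNReal.ofReal_ne_top,
    ENNReal.toReal_ofReal hq.le, ← ENNReal.toReal_rpow, LqNorm]
  refine rpow_le_rpow (integral_nonneg fun x => by positivity) ?_ (by positivity)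
  refine (le_norm_self _).trans ((norm_integral_le_lintegral_norm _).trans_eq ?_)
  simp only [ofReal_norm, enorm_rpow_of_nonneg (norm_nonneg _) hq.le, enorm_norm]

end LqNorm

lemma integrable_schwartzMap_slice {D E F : Type*} [NormedAddCommGroup D] [NormedSpace ℝ D]
    [MeasurableSpace D] [BorelSpace D] [SecondCountableTopology D] [NormedAddCommGroup E]
    [NormedSpace ℝ E] [NormedAddCommGroup F] [NormedSpace ℝ F] {μ : Measure D}
    [μ.HasTemperateGrowth] (f : SchwartzMap (D × E) F) (s : E) :
    Integrable (fun z => f (z, s)) μ := by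
  have temperate : Function.HasTemperateGrowth fun z : D => (z, s) := by
    convert (ContinuousLinearMap.inl ℝ D E).hasTemperateGrowth.add
      (.const ((0, s) : D × E)) using 2 with z
    simp
  have antilipschitz : AntilipschitzWith 1 fun z : D => (z, s) :=
    .of_le_mul_dist fun z w => by simp
  exact (SchwartzMap.compCLMOfAntilipschitz ℝ temperate antilipschitz f).integrable

theorem stmt_16_general {V : Type*} [NormedAddCommGroup V] [InnerProductSpace ℝ V]
    [FiniteDimensional ℝ V] [MeasurableSpace V] [BorelSpace V] {q : ℝ} (hq : 1 < q) :
    ∃ C : ℝ, 0 < C ∧ ∀ c, 0 ≤ c → ∀ m : V → ℂ, IsMikhlinSymbol (finrank ℝ V + 1) c m →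
      ∀ ς : ℝ, (ς = 1 ∨ ς = -1) → ∀ f : V × ℝ → ℂ,
        (∀ᵐ y ∂volume.restrict (Ioi 0), Integrable fun z => f (z, ς * y)) →
        MemLp f (ENNReal.ofReal q) (volume.restrict {p | 0 < ς * p.2}) →
          LqNorm (volume.restrict {p : V × ℝ | 0 < p.2}) q
              (mikhlinPoissonOperator m fun p => f (p.1, ς * p.2)) ≤
            C * c * LqNorm (volume.restrict {p | 0 < ς * p.2}) q f := by
  have hq0 : 0 < q := one_pos.trans hq
  obtain ⟨C, hC⟩ := exists_bound_eLpNorm_mikhlinPoissonOperator V hq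
  refine ⟨C + 1, by positivity, fun c hc m hm ς hς f hslice hf => ?_⟩
  have preserving := measurePreserving_mul_snd_upperHalfSpace (V := V) hς
  have eLpNorm_le := hC c m hm _ (hf.1.comp_measurePreserving preserving) hslice
  rw [eLpNorm_comp_measurePreserving hf.1 preserving] at eLpNorm_le
  have bound_ne_top : C * ENNReal.ofReal c *
      eLpNorm f (ENNReal.ofReal q) (volume.restrict {p | 0 < ς * p.2}) ≠ ∞ :=
    ENNReal.mul_ne_top (by finiteness) hf.2.ne
  refine (LqNorm_le_toReal_eLpNorm hq0).trans
    ((ENNReal.toReal_mono bound_ne_top eLpNorm_le).trans ?_)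
  rw [ENNReal.toReal_mul, ENNReal.toReal_mul, ENNReal.coe_toReal, ENNReal.toReal_ofReal hc,
    ← LqNorm_eq_toReal_eLpNorm hq0 hf.1]
  gcongr
  · exact rpow_nonneg (integral_nonneg fun x => by positivity) _
  · exact le_add_of_nonneg_right zero_le_one

/-- Lemma 2.4 (operator `M₁`): the operator built from a Mikhlin-type symbol `m(ξ')` and the
Poisson-type kernel `|ξ'| e^{-|ξ'|(x_N + y_N)}` is bounded from `L^q(ℝ^N_ς)` to
`L^q(ℝ^N_+)`, with norm controlled by the symbol bounds. -/
theorem stmt_16 (N : ℕ) (hN : 2 ≤ N) (q : ℝ) (hq : 1 < q) (c : ℝ) (hc : 0 < c) :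
    ∃ C : ℝ, 0 < C ∧
      ∀ m : EuclideanSpace ℝ (Fin (N - 1)) → ℂ,
        ContDiffOn ℝ (⊤ : ℕ∞) m {0}ᶜ →
        (∀ ξ : EuclideanSpace ℝ (Fin (N - 1)), ξ ≠ 0 → ∀ n : ℕ, n ≤ N + 1 →
          ‖iteratedFDeriv ℝ n m ξ‖ ≤ c * ‖ξ‖ ^ (-(n : ℝ))) →
      ∀ ς : ℝ, (ς = 1 ∨ ς = -1) →
      ∀ f : SchwartzMap (EuclideanSpace ℝ (Fin (N - 1)) × ℝ) ℂ,
        LqNorm (volume.restrict {p : EuclideanSpace ℝ (Fin (N - 1)) × ℝ | 0 < p.2}) q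
          (fun p =>
            ∫ y in Set.Ioi (0 : ℝ),
              (((2 * π) ^ (N - 1) : ℝ) : ℂ)⁻¹ *
                ∫ ξ : EuclideanSpace ℝ (Fin (N - 1)),
                  Complex.exp (Complex.I * (⟪p.1, ξ⟫ : ℂ)) * m ξ * (‖ξ‖ : ℂ) *
                    Complex.exp (-(‖ξ‖ : ℂ) * ((p.2 : ℂ) + (y : ℂ))) *
                    (∫ z : EuclideanSpace ℝ (Fin (N - 1)),
                      Complex.exp (-Complex.I * (⟪z, ξ⟫ : ℂ)) * f (z, ς * y))) ≤
          C * LqNorm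
              (volume.restrict {p : EuclideanSpace ℝ (Fin (N - 1)) × ℝ | 0 < ς * p.2}) q
              (fun p => f p) := by
  have finrank_eq : finrank ℝ (EuclideanSpace ℝ (Fin (N - 1))) = N - 1 := finrank_euclideanSpace_fin
  obtain ⟨C, hC, bound⟩ := stmt_16_general (V := EuclideanSpace ℝ (Fin (N - 1))) hq
  refine ⟨C * c, by positivity, fun m hm hb ς hς f => ?_⟩
  have hsymbol : IsMikhlinSymbol (finrank ℝ (EuclideanSpace ℝ (Fin (N - 1))) + 1) c m :=
    ⟨hm.of_le (mod_cast le_top), fun ξ hξ n hn => hb ξ hξ n (by omega)⟩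
  have operator_bound := bound c hc.le m hsymbol ς hς f
    (.of_forall fun y => integrable_schwartzMap_slice f (ς * y))
    ((f.memLp _ (volume.prod volume)).restrict _)
  unfold mikhlinPoissonOperator at operator_bound
  rwa [finrank_eq] at operator_bound
end

section
/- Let d ≥ 1 be an integer, σ ∈ (0, π/2), ρ > 0, and n ∈ ℕ. There exists a constant C = C(d, n, σ, ρ) > 0 such that for every λ ∈ ℂ with λ ≠ 0 and |arg λ| < π − σ, and every x ∈ ℝ^d with x ≠ 0, the following three bounds hold: ‖D^n(ξ ↦ λ/(ρλ + ‖ξ‖²))(x)‖ ≤ C ‖x‖^{−n}; for each coordinate index j, ‖D^n(ξ ↦ λ^{1/2} · i ξ_j/(ρλ + ‖ξ‖²))(x)‖ ≤ C ‖x‖^{−n}; and for all coordinate indices k, l, ‖D^n(ξ ↦ ξ_k ξ_l/(ρλ + ‖ξ‖²))(x)‖ ≤ C ‖x‖^{−n}. -/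
open Real

/-!
At a point `x ≠ 0`, the Mikhlin bounds `‖D^k f(x)‖ ‖x‖^k ≤ A` for `k ≤ n` are stable under sums and
products, and under `f ↦ f⁻¹` as soon as `A ≤ M ‖f x‖`: the chain rule then costs a factor depending
only on `n` and `M`. For `|arg λ| < π - σ` the vectors `ρλ` and `‖x‖²` of the plane never point in
nearly opposite directions, so `ρ‖λ‖ + ‖x‖² ≤ ‖ρλ + ‖x‖²‖ / sin (σ/2)`. This makes the denominator
elliptic uniformly in `λ`, and its size dominates the bound `‖λ‖ + ‖x‖²` (up to constants) of each
of the three numerators.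
-/

open scoped Nat

section PointwiseBounds

variable {𝕜 E F G : Type*} [NontriviallyNormedField 𝕜] [NormedAddCommGroup E] [NormedSpace 𝕜 E]
  [NormedAddCommGroup F] [NormedSpace 𝕜 F] [NormedAddCommGroup G] [NormedSpace 𝕜 G]

theorem norm_iteratedFDeriv_comp_le_of_contDiffAt {g : F → G} {f : E → F} {n : ℕ} {x : E}
    (hg : ContDiffAt 𝕜 n g (f x)) (hf : ContDiffAt 𝕜 n f x) {C D : ℝ}
    (hC : ∀ i ≤ n, ‖iteratedFDeriv 𝕜 i g (f x)‖ ≤ C)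
    (hD : ∀ i, 1 ≤ i → i ≤ n → ‖iteratedFDeriv 𝕜 i f x‖ ≤ D ^ i) :
    ‖iteratedFDeriv 𝕜 n (g ∘ f) x‖ ≤ n ! * C * D ^ n := by
  obtain ⟨t, ht, hxt, hgt⟩ := hg.contDiffOn' le_rfl (by simp)
  obtain ⟨u, hu, hxu, hfu⟩ := hf.contDiffOn' le_rfl (by simp)
  simp only [Set.insert_eq_of_mem, Set.mem_univ, Set.univ_inter] at hgt hfu
  have hs : IsOpen (u ∩ f ⁻¹' t) := hfu.continuousOn.isOpen_inter_preimage hu ht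
  have hxs : x ∈ u ∩ f ⁻¹' t := ⟨hxu, hxt⟩
  have key := norm_iteratedFDerivWithin_comp_le hgt (hfu.mono Set.inter_subset_left) le_rfl
    ht.uniqueDiffOn hs.uniqueDiffOn (fun _ hy => hy.2) hxs (C := C) (D := D)
    (fun i hi => by rw [iteratedFDerivWithin_of_isOpen i ht hxt]; exact hC i hi)
    (fun i h1 hi => by rw [iteratedFDerivWithin_of_isOpen i hs hxs]; exact hD i h1 hi)
  rwa [iteratedFDerivWithin_of_isOpen n hs hxs] at key

theorem norm_iteratedFDeriv_mul_le_of_contDiffAt {A : Type*} [NormedRing A] [NormedAlgebra 𝕜 A]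
    {f g : E → A} {n : ℕ} {x : E} (hf : ContDiffAt 𝕜 n f x) (hg : ContDiffAt 𝕜 n g x) :
    ‖iteratedFDeriv 𝕜 n (fun y => f y * g y) x‖ ≤ ∑ i ∈ Finset.range (n + 1),
      (n.choose i : ℝ) * ‖iteratedFDeriv 𝕜 i f x‖ * ‖iteratedFDeriv 𝕜 (n - i) g x‖ := by
  obtain ⟨s, hs, hxs, hfs⟩ := hf.contDiffOn' le_rfl (by simp)
  obtain ⟨t, ht, hxt, hgt⟩ := hg.contDiffOn' le_rfl (by simp)
  simp only [Set.insert_eq_of_mem, Set.mem_univ, Set.univ_inter] at hfs hgt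
  have hst : IsOpen (s ∩ t) := hs.inter ht
  have hx : x ∈ s ∩ t := ⟨hxs, hxt⟩
  have key := norm_iteratedFDerivWithin_mul_le (hfs.mono Set.inter_subset_left)
    (hgt.mono Set.inter_subset_right) hst.uniqueDiffOn hx le_rfl
  simpa only [iteratedFDerivWithin_of_isOpen _ hst hx] using key

end PointwiseBounds

theorem norm_iteratedFDeriv_inv {𝕜 : Type*} [RCLike 𝕜] {z : 𝕜} (hz : z ≠ 0) (k : ℕ) :
    ‖iteratedFDeriv ℝ k Inv.inv z‖ = k ! * ‖z‖ ^ (-1 - k : ℤ) := by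
  rw [← (contDiffAt_inv 𝕜 hz).restrictScalars_iteratedFDeriv (𝕜 := ℝ), Function.comp_apply,
    ContinuousMultilinearMap.norm_restrictScalars, norm_iteratedFDeriv_eq_norm_iteratedDeriv,
    iteratedDeriv_eq_iterate, iter_deriv_inv]
  simp

/-- The Mikhlin bounds of order `n` at the point `x`: `f` is `C^n` near `x` and
`‖D^k f(x)‖ ≤ A ‖x‖^{-k}` for `k ≤ n`. The power of `‖x‖` is kept on the left so that no division
occurs. -/
structure MikhlinBoundAt {E F : Type*} [NormedAddCommGroup E] [NormedSpace ℝ E]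
    [NormedAddCommGroup F] [NormedSpace ℝ F] (n : ℕ) (f : E → F) (x : E) (A : ℝ) : Prop where
  contDiffAt : ContDiffAt ℝ n f x
  norm_iteratedFDeriv_mul_le : ∀ k ≤ n, ‖iteratedFDeriv ℝ k f x‖ * ‖x‖ ^ k ≤ A

namespace MikhlinBoundAt

section NormedSpace

variable {E F G : Type*} [NormedAddCommGroup E] [NormedSpace ℝ E] [NormedAddCommGroup F]
  [NormedSpace ℝ F] [NormedAddCommGroup G] [NormedSpace ℝ G] {n : ℕ} {f g : E → F} {x : E}
  {A B : ℝ}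

theorem norm_apply_le (hf : MikhlinBoundAt n f x A) : ‖f x‖ ≤ A := by
  simpa using hf.norm_iteratedFDeriv_mul_le 0 n.zero_le

theorem nonneg (hf : MikhlinBoundAt n f x A) : 0 ≤ A :=
  (norm_nonneg _).trans hf.norm_apply_le

theorem mono (hf : MikhlinBoundAt n f x A) (hAB : A ≤ B) : MikhlinBoundAt n f x B :=
  ⟨hf.contDiffAt, fun k hk => (hf.norm_iteratedFDeriv_mul_le k hk).trans hAB⟩

theorem norm_iteratedFDeriv_le_rpow (hf : MikhlinBoundAt n f x A) (hx : x ≠ 0) :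
    ‖iteratedFDeriv ℝ n f x‖ ≤ A * ‖x‖ ^ (-(n : ℝ)) := by
  have hx' : 0 < ‖x‖ := norm_pos_iff.2 hx
  rw [rpow_neg hx'.le, rpow_natCast, ← div_eq_mul_inv, le_div_iff₀ (by positivity)]
  exact hf.norm_iteratedFDeriv_mul_le n le_rfl

theorem const (n : ℕ) (c : F) (x : E) : MikhlinBoundAt n (fun _ => c) x ‖c‖ where
  contDiffAt := contDiffAt_const
  norm_iteratedFDeriv_mul_le
    | 0, _ => by simp
    | k + 1, _ => by simp [iteratedFDeriv_succ_const]

theorem clm (n : ℕ) (L : E →L[ℝ] F) (x : E) : MikhlinBoundAt n L x (‖L‖ * ‖x‖) where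
  contDiffAt := L.contDiff.contDiffAt
  norm_iteratedFDeriv_mul_le k _ := by
    have hfderiv : fderiv ℝ L = fun _ => L := funext fun _ => L.fderiv
    match k with
    | 0 => simpa using L.le_opNorm x
    | 1 => simp [← norm_iteratedFDeriv_fderiv, hfderiv]
    | k + 2 =>
      rw [← norm_iteratedFDeriv_fderiv, hfderiv, iteratedFDeriv_succ_const]
      simp only [Pi.zero_apply, norm_zero, zero_mul]
      positivity

theorem add (hf : MikhlinBoundAt n f x A) (hg : MikhlinBoundAt n g x B) :
    MikhlinBoundAt n (fun y => f y + g y) x (A + B) where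
  contDiffAt := hf.contDiffAt.add hg.contDiffAt
  norm_iteratedFDeriv_mul_le k hk := by
    have hkn : (k : WithTop ℕ∞) ≤ n := mod_cast hk
    rw [fun_iteratedFDeriv_add_apply (hf.contDiffAt.of_le hkn) (hg.contDiffAt.of_le hkn)]
    calc _ ≤ (‖iteratedFDeriv ℝ k f x‖ + ‖iteratedFDeriv ℝ k g x‖) * ‖x‖ ^ k := by
          gcongr; exact norm_add_le _ _
      _ ≤ A + B := by
          rw [add_mul]
          exact add_le_add (hf.norm_iteratedFDeriv_mul_le k hk) (hg.norm_iteratedFDeriv_mul_le k hk)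

theorem const_smul (hf : MikhlinBoundAt n f x A) (c : ℝ) :
    MikhlinBoundAt n (fun y => c • f y) x (|c| * A) where
  contDiffAt := contDiffAt_const.smul hf.contDiffAt
  norm_iteratedFDeriv_mul_le k hk := by
    have hkn : (k : WithTop ℕ∞) ≤ n := mod_cast hk
    rw [iteratedFDeriv_const_smul_apply' (hf.contDiffAt.of_le hkn), norm_smul, norm_eq_abs,
      mul_assoc]
    gcongr
    exact hf.norm_iteratedFDeriv_mul_le k hk

theorem linearIsometry_comp (L : F →ₗᵢ[ℝ] G) (hf : MikhlinBoundAt n f x A) :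
    MikhlinBoundAt n (L ∘ f) x A where
  contDiffAt := L.contDiff.contDiffAt.comp x hf.contDiffAt
  norm_iteratedFDeriv_mul_le k hk := by
    rw [L.norm_iteratedFDeriv_comp_left hf.contDiffAt (mod_cast hk)]
    exact hf.norm_iteratedFDeriv_mul_le k hk

theorem mul {R : Type*} [NormedRing R] [NormedAlgebra ℝ R] {f g : E → R}
    (hf : MikhlinBoundAt n f x A) (hg : MikhlinBoundAt n g x B) :
    MikhlinBoundAt n (fun y => f y * g y) x (2 ^ n * (A * B)) where
  contDiffAt := hf.contDiffAt.mul hg.contDiffAt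
  norm_iteratedFDeriv_mul_le k hk := by
    have hkn : (k : WithTop ℕ∞) ≤ n := mod_cast hk
    have hA := hf.nonneg
    have hB := hg.nonneg
    calc _ ≤ (∑ i ∈ Finset.range (k + 1), (k.choose i : ℝ) * ‖iteratedFDeriv ℝ i f x‖ *
            ‖iteratedFDeriv ℝ (k - i) g x‖) * ‖x‖ ^ k := by
          gcongr
          exact norm_iteratedFDeriv_mul_le_of_contDiffAt (hf.contDiffAt.of_le hkn)
            (hg.contDiffAt.of_le hkn)
      _ = ∑ i ∈ Finset.range (k + 1), (k.choose i : ℝ) * ((‖iteratedFDeriv ℝ i f x‖ * ‖x‖ ^ i) *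
            (‖iteratedFDeriv ℝ (k - i) g x‖ * ‖x‖ ^ (k - i))) := by
          rw [Finset.sum_mul]
          refine Finset.sum_congr rfl fun i hi => ?_
          rw [← pow_mul_pow_sub ‖x‖ (Finset.mem_range_succ_iff.1 hi)]
          ring
      _ ≤ ∑ i ∈ Finset.range (k + 1), (k.choose i : ℝ) * (A * B) := by
          gcongr with i hi
          · exact hf.norm_iteratedFDeriv_mul_le i ((Finset.mem_range_succ_iff.1 hi).trans hk)
          · exact hg.norm_iteratedFDeriv_mul_le (k - i) ((k.sub_le i).trans hk)
      _ = 2 ^ k * (A * B) := by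
          rw [← Finset.sum_mul]
          exact_mod_cast congrArg (fun m : ℕ => (m : ℝ) * (A * B)) (Nat.sum_range_choose k)
      _ ≤ 2 ^ n * (A * B) := by
          gcongr
          exact one_le_two

section Inv

variable {𝕜 : Type*} [RCLike 𝕜] {q : E → 𝕜} {M : ℝ}

theorem inv_of_norm_eq_one (hq : MikhlinBoundAt n q x M) (hx : x ≠ 0) (h1 : ‖q x‖ = 1) :
    MikhlinBoundAt n (fun y => (q y)⁻¹) x (n ! ^ 2 * M ^ n) := by
  have hq0 : q x ≠ 0 := norm_pos_iff.1 (h1 ▸ one_pos)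
  have hM : 1 ≤ M := h1 ▸ hq.norm_apply_le
  have : 0 < ‖x‖ := norm_pos_iff.2 hx
  refine ⟨hq.contDiffAt.inv hq0, fun k hk => ?_⟩
  have hinv : ∀ i ≤ k, ‖iteratedFDeriv ℝ i Inv.inv (q x)‖ ≤ k ! := fun i hi => by
    rw [norm_iteratedFDeriv_inv hq0, h1, one_zpow, mul_one]
    exact_mod_cast Nat.factorial_le hi
  have hderiv : ∀ i, 1 ≤ i → i ≤ k → ‖iteratedFDeriv ℝ i q x‖ ≤ (M / ‖x‖) ^ i :=
    fun i hi hik => by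
      rw [div_pow, le_div_iff₀ (by positivity)]
      exact (hq.norm_iteratedFDeriv_mul_le i (hik.trans hk)).trans
        (le_self_pow₀ hM (Nat.one_le_iff_ne_zero.1 hi))
  have hcomp := norm_iteratedFDeriv_comp_le_of_contDiffAt (contDiffAt_inv ℝ hq0)
    (hq.contDiffAt.of_le (mod_cast hk)) hinv hderiv
  calc _ ≤ k ! * k ! * (M / ‖x‖) ^ k * ‖x‖ ^ k := by gcongr; exact hcomp
    _ = k ! ^ 2 * M ^ k := by rw [div_pow]; field_simp
    _ ≤ n ! ^ 2 * M ^ n := by gcongr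

theorem inv (hq : MikhlinBoundAt n q x (M * ‖q x‖)) (hx : x ≠ 0) (hq0 : q x ≠ 0) :
    MikhlinBoundAt n (fun y => (q y)⁻¹) x (n ! ^ 2 * M ^ n * ‖q x‖⁻¹) := by
  have hr : ‖q x‖ ≠ 0 := norm_ne_zero_iff.2 hq0
  have hnormalized : MikhlinBoundAt n (fun y => ‖q x‖⁻¹ • q y) x M :=
    (hq.const_smul ‖q x‖⁻¹).mono (by
      rw [abs_inv, abs_norm, mul_left_comm, inv_mul_cancel₀ hr, mul_one])
  have hnorm : ‖‖q x‖⁻¹ • q x‖ = 1 := by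
    rw [norm_smul, norm_inv, norm_norm, inv_mul_cancel₀ hr]
  have hinv := (hnormalized.inv_of_norm_eq_one hx hnorm).const_smul ‖q x‖⁻¹
  simpa only [smul_inv₀, inv_inv, smul_smul, inv_mul_cancel₀ hr, one_smul, abs_inv, abs_norm,
    mul_comm ‖q x‖⁻¹] using hinv

end Inv

end NormedSpace

theorem norm_sq {E : Type*} [NormedAddCommGroup E] [InnerProductSpace ℝ E] (n : ℕ) (x : E) :
    MikhlinBoundAt n (fun y : E => ‖y‖ ^ 2) x (2 * ‖x‖ ^ 2) where
  contDiffAt := (contDiff_norm_sq ℝ).contDiffAt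
  norm_iteratedFDeriv_mul_le
    | 0, _ => by simpa using le_mul_of_one_le_left (sq_nonneg ‖x‖) one_le_two
    | k + 1, _ => by
      have hinner : MikhlinBoundAt k (2 • innerSL ℝ : E →L[ℝ] E →L[ℝ] ℝ) x (2 * ‖x‖) :=
        (clm k _ x).mono (by
          gcongr
          exact (norm_nsmul_le ..).trans (by simpa using norm_innerSL_le (𝕜 := ℝ) (E := E)))
      rw [← norm_iteratedFDeriv_fderiv, fderiv_norm_sq]
      calc _ = ‖iteratedFDeriv ℝ k (2 • innerSL ℝ : E →L[ℝ] E →L[ℝ] ℝ) x‖ * ‖x‖ ^ k * ‖x‖ := by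
            rw [pow_succ, mul_assoc]; rfl
        _ ≤ 2 * ‖x‖ * ‖x‖ := mul_le_mul_of_nonneg_right
            (hinner.norm_iteratedFDeriv_mul_le k le_rfl) (norm_nonneg x)
        _ = 2 * ‖x‖ ^ 2 := by ring

theorem div_add_norm_sq {E : Type*} [NormedAddCommGroup E] [InnerProductSpace ℝ E] {n : ℕ}
    {f : E → ℂ} {x : E} {a : ℂ} {B M : ℝ} (hf : MikhlinBoundAt n f x (B * (‖a‖ + ‖x‖ ^ 2)))
    (hx : x ≠ 0) (ha : ‖a‖ + ‖x‖ ^ 2 ≤ M * ‖a + (‖x‖ : ℂ) ^ 2‖) :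
    MikhlinBoundAt n (fun ξ => f ξ / (a + (‖ξ‖ : ℂ) ^ 2)) x
      (2 ^ n * (B * M * (n ! ^ 2 * (2 * M) ^ n))) := by
  have hsum : 0 < ‖a‖ + ‖x‖ ^ 2 := by have := norm_pos_iff.2 hx; positivity
  have hne : a + (‖x‖ : ℂ) ^ 2 ≠ 0 := fun h => by
    rw [h, norm_zero, mul_zero] at ha
    exact absurd ha hsum.not_ge
  have hM : 0 ≤ M := (pos_of_mul_pos_left (hsum.trans_le ha) (norm_nonneg _)).le
  have hB : 0 ≤ B := nonneg_of_mul_nonneg_left hf.nonneg hsum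
  have hdenom : MikhlinBoundAt n (fun ξ : E => a + (‖ξ‖ : ℂ) ^ 2) x (‖a‖ + 2 * ‖x‖ ^ 2) := by
    simpa [Function.comp_def] using
      (const n a x).add ((norm_sq n x).linearIsometry_comp Complex.ofRealLI)
  have hinv := (hdenom.mono (B := 2 * M * ‖a + (‖x‖ : ℂ) ^ 2‖)
    (by linarith [norm_nonneg a])).inv hx hne
  simp only [div_eq_mul_inv]
  refine (hf.mul hinv).mono ?_
  calc _ = 2 ^ n * (B * ((‖a‖ + ‖x‖ ^ 2) / ‖a + (‖x‖ : ℂ) ^ 2‖) * (n ! ^ 2 * (2 * M) ^ n)) := by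
        ring
    _ ≤ _ := by
        gcongr
        exact (div_le_iff₀ (norm_pos_iff.2 hne)).2 ha

end MikhlinBoundAt

theorem cos_half_mul_norm_add_norm_le {E : Type*} [NormedAddCommGroup E] [InnerProductSpace ℝ E]
    {x y : E} {θ : ℝ} (h : ‖x‖ * ‖y‖ * cos θ ≤ inner ℝ x y) :
    cos (θ / 2) * (‖x‖ + ‖y‖) ≤ ‖x + y‖ := by
  refine le_of_sq_le_sq ?_ (norm_nonneg _)
  have hcos : cos (θ / 2) ^ 2 = (1 + cos θ) / 2 := by
    rw [cos_sq]; ring_nf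
  rw [mul_pow, hcos, norm_add_sq_real]
  nlinarith [mul_nonneg (sub_nonneg.2 (cos_le_one θ)) (sq_nonneg (‖x‖ - ‖y‖))]

theorem sin_half_mul_norm_add_le_of_abs_arg_le {σ : ℝ} (hσ : 0 ≤ σ) {z : ℂ}
    (hz : |z.arg| ≤ π - σ) {s : ℝ} (hs : 0 ≤ s) : sin (σ / 2) * (‖z‖ + s) ≤ ‖z + s‖ := by
  have hcos : cos (π - σ) ≤ cos z.arg := by
    rw [← cos_abs z.arg]
    exact cos_le_cos_of_nonneg_of_le_pi (abs_nonneg _) (by linarith) hz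
  have hinner : ‖z‖ * ‖(s : ℂ)‖ * cos (π - σ) ≤ inner ℝ z s := by
    calc ‖z‖ * ‖(s : ℂ)‖ * cos (π - σ) ≤ ‖z‖ * ‖(s : ℂ)‖ * cos z.arg := by gcongr
      _ = s * z.re := by
        rw [Complex.norm_of_nonneg hs, ← Complex.norm_mul_cos_arg z]; ring
      _ = inner ℝ z s := by simp [Complex.inner]
  have hhalf : cos ((π - σ) / 2) = sin (σ / 2) := by rw [sub_div, cos_pi_div_two_sub]
  simpa only [hhalf, Complex.norm_of_nonneg hs] using cos_half_mul_norm_add_norm_le hinner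

theorem norm_cpow_half_mul_le (lam : ℂ) (r : ℝ) :
    ‖lam ^ ((1 : ℂ) / 2)‖ * r ≤ ‖lam‖ + r ^ 2 := by
  have hsq : ‖lam ^ ((1 : ℂ) / 2)‖ ^ 2 = ‖lam‖ := by
    rw [← norm_pow, one_div, Complex.cpow_ofNat_inv_pow]
  nlinarith [two_mul_le_add_sq ‖lam ^ ((1 : ℂ) / 2)‖ r, sq_nonneg r, norm_nonneg lam]

theorem exists_norm_iteratedFDeriv_div_le {E : Type*} [NormedAddCommGroup E]
    [InnerProductSpace ℝ E] {σ : ℝ} (hσ : σ ∈ Set.Ioo 0 π) {ρ : ℝ} (hρ : 0 < ρ) {B : ℝ}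
    (hB : 0 < B) (n : ℕ) :
    ∃ C : ℝ, 0 < C ∧ ∀ lam : ℂ, |lam.arg| ≤ π - σ → ∀ x : E, x ≠ 0 → ∀ f : E → ℂ,
      MikhlinBoundAt n f x (B * (‖lam‖ + ‖x‖ ^ 2)) →
        ‖iteratedFDeriv ℝ n (fun ξ => f ξ / ((ρ : ℂ) * lam + (‖ξ‖ : ℂ) ^ 2)) x‖ ≤
          C * ‖x‖ ^ (-(n : ℝ)) := by
  have hsin : 0 < sin (σ / 2) :=
    sin_pos_of_pos_of_lt_pi (by linarith [hσ.1]) (by linarith [hσ.1, hσ.2])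
  refine ⟨2 ^ n * (B * (1 + ρ⁻¹) * (sin (σ / 2))⁻¹ * (n ! ^ 2 * (2 * (sin (σ / 2))⁻¹) ^ n)),
    by positivity, fun lam hlam x hx f hf => ?_⟩
  have hnum : ‖lam‖ + ‖x‖ ^ 2 ≤ (1 + ρ⁻¹) * (‖ρ * lam‖ + ‖x‖ ^ 2) := by
    calc ‖lam‖ + ‖x‖ ^ 2 ≤ ‖lam‖ + ‖x‖ ^ 2 + (ρ * ‖lam‖ + ρ⁻¹ * ‖x‖ ^ 2) :=
          le_add_of_nonneg_right (by positivity)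
      _ = (1 + ρ⁻¹) * (‖ρ * lam‖ + ‖x‖ ^ 2) := by
        rw [norm_mul, Complex.norm_of_nonneg hρ.le]; field_simp; ring
  have hden : ‖ρ * lam‖ + ‖x‖ ^ 2 ≤ (sin (σ / 2))⁻¹ * ‖ρ * lam + (‖x‖ : ℂ) ^ 2‖ := by
    rw [inv_mul_eq_div, le_div_iff₀' hsin]
    exact mod_cast sin_half_mul_norm_add_le_of_abs_arg_le hσ.1.le
      (by rwa [Complex.arg_real_mul _ hρ]) (sq_nonneg ‖x‖)
  have hf' : MikhlinBoundAt n f x (B * (1 + ρ⁻¹) * (‖ρ * lam‖ + ‖x‖ ^ 2)) :=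
    hf.mono (by rw [mul_assoc]; gcongr)
  exact (hf'.div_add_norm_sq hx hden).norm_iteratedFDeriv_le_rpow hx

theorem stmt_19_general {E : Type*} [NormedAddCommGroup E] [InnerProductSpace ℝ E] {σ : ℝ}
    (hσ : σ ∈ Set.Ioo 0 π) {ρ : ℝ} (hρ : 0 < ρ) (n : ℕ) :
    ∃ C : ℝ, 0 < C ∧ ∀ lam : ℂ, |lam.arg| ≤ π - σ → ∀ x : E, x ≠ 0 →
      ‖iteratedFDeriv ℝ n (fun ξ : E => lam / ((ρ : ℂ) * lam + (‖ξ‖ : ℂ) ^ 2)) x‖ ≤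
          C * ‖x‖ ^ (-(n : ℝ)) ∧
      (∀ ℓ : E →L[ℝ] ℂ, ‖ℓ‖ ≤ 1 →
        ‖iteratedFDeriv ℝ n (fun ξ => lam ^ ((1 : ℂ) / 2) * (Complex.I * ℓ ξ) /
          ((ρ : ℂ) * lam + (‖ξ‖ : ℂ) ^ 2)) x‖ ≤ C * ‖x‖ ^ (-(n : ℝ))) ∧
      (∀ ℓ m : E →L[ℝ] ℂ, ‖ℓ‖ ≤ 1 → ‖m‖ ≤ 1 →
        ‖iteratedFDeriv ℝ n (fun ξ => ℓ ξ * m ξ / ((ρ : ℂ) * lam + (‖ξ‖ : ℂ) ^ 2)) x‖ ≤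
          C * ‖x‖ ^ (-(n : ℝ))) := by
  obtain ⟨C, hC, hdiv⟩ := exists_norm_iteratedFDeriv_div_le (E := E) hσ hρ (pow_pos two_pos n) n
  refine ⟨C, hC, fun lam hlam x hx => ?_⟩
  have hlinear : ∀ ℓ : E →L[ℝ] ℂ, ‖ℓ‖ ≤ 1 → MikhlinBoundAt n ℓ x ‖x‖ := fun ℓ hℓ =>
    (MikhlinBoundAt.clm n ℓ x).mono (mul_le_of_le_one_left (norm_nonneg x) hℓ)
  refine ⟨hdiv lam hlam x hx _ ?_, fun ℓ hℓ => hdiv lam hlam x hx _ ?_,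
    fun ℓ m hℓ hm => hdiv lam hlam x hx _ ?_⟩
  · refine (MikhlinBoundAt.const n lam x).mono ?_
    calc ‖lam‖ ≤ ‖lam‖ + ‖x‖ ^ 2 := le_add_of_nonneg_right (by positivity)
      _ ≤ 2 ^ n * (‖lam‖ + ‖x‖ ^ 2) :=
        le_mul_of_one_le_left (by positivity) (one_le_pow₀ one_le_two)
  · refine ((MikhlinBoundAt.const n _ x).mul (hlinear (Complex.I • ℓ) ?_)).mono ?_
    · rwa [norm_smul, Complex.norm_I, one_mul]
    · gcongr
      exact norm_cpow_half_mul_le lam ‖x‖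
  · refine ((hlinear ℓ hℓ).mul (hlinear m hm)).mono ?_
    gcongr
    rw [← sq]
    exact le_add_of_nonneg_left (norm_nonneg lam)

theorem norm_ofReal_comp_proj_le_one {ι : Type*} [Fintype ι] (j : ι) :
    ‖Complex.ofRealCLM.comp (EuclideanSpace.proj j : EuclideanSpace ℝ ι →L[ℝ] ℝ)‖ ≤ 1 :=
  ContinuousLinearMap.opNorm_le_bound _ zero_le_one fun y => by
    simpa using PiLp.norm_apply_le y j

/-- The Fourier-multiplier symbol estimates, uniform in `λ`, from the proof of Lemma 3.1:
the symbols `λ/(ρλ+|ξ|²)`, `λ^{1/2} iξ_j/(ρλ+|ξ|²)`, `ξ_kξ_l/(ρλ+|ξ|²)` satisfy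
`‖D^n m(x)‖ ≤ C ‖x‖^{-n}` for `x ≠ 0`. -/
theorem stmt_19 (d : ℕ) (hd : 1 ≤ d) (σ : ℝ) (hσ : σ ∈ Set.Ioo 0 (π / 2))
    (ρ : ℝ) (hρ : 0 < ρ) (n : ℕ) :
    ∃ C : ℝ, 0 < C ∧ ∀ lam : ℂ, lam ≠ 0 → |lam.arg| < π - σ →
      ∀ x : EuclideanSpace ℝ (Fin d), x ≠ 0 →
        ‖iteratedFDeriv ℝ n (fun ξ : EuclideanSpace ℝ (Fin d) =>
            lam / ((ρ : ℂ) * lam + (‖ξ‖ : ℂ) ^ 2)) x‖ ≤ C * ‖x‖ ^ (-(n : ℝ)) ∧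
        (∀ j : Fin d,
          ‖iteratedFDeriv ℝ n (fun ξ : EuclideanSpace ℝ (Fin d) =>
              lam ^ ((1 : ℂ) / 2) * (Complex.I * (ξ j : ℂ)) /
                ((ρ : ℂ) * lam + (‖ξ‖ : ℂ) ^ 2)) x‖ ≤ C * ‖x‖ ^ (-(n : ℝ))) ∧
        (∀ k l : Fin d,
          ‖iteratedFDeriv ℝ n (fun ξ : EuclideanSpace ℝ (Fin d) =>
              (ξ k : ℂ) * (ξ l : ℂ) /
                ((ρ : ℂ) * lam + (‖ξ‖ : ℂ) ^ 2)) x‖ ≤ C * ‖x‖ ^ (-(n : ℝ))) := by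
  have hproj := norm_ofReal_comp_proj_le_one (ι := Fin d)
  obtain ⟨C, hC, h⟩ := stmt_19_general (E := EuclideanSpace ℝ (Fin d))
    ⟨hσ.1, hσ.2.trans (half_lt_self pi_pos)⟩ hρ n
  refine ⟨C, hC, fun lam _ hlam x hx => ?_⟩
  obtain ⟨hconst, hlinear, hquadratic⟩ := h lam hlam.le x hx
  refine ⟨hconst, fun j => ?_, fun k l => ?_⟩
  · simpa using hlinear _ (hproj j)
  · simpa using hquadratic _ _ (hproj k) (hproj l)
end
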